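/- Let F be an algebraically closed field, q, Q_1, …, Q_r ∈ F with q ≠ 0, and n ≥ 1. The Ariki–Koike algebra H_{n,r}(q, Q_1, …, Q_r) is self-injective: it is injective as a right module over itself. -/

import Mathlib

/-!
The Ariki–Koike algebra is shown to be a Frobenius algebra: it is finite dimensional and carries
a linear form `f` whose associated bilinear form `(s, v) ↦ f (s * v)` is nondegenerate
(`AK.Frob`). Then every functional on the algebra is of the form `f (s * ·)`; applied to the
composite of `f` with a homomorphism from a right ideal, extended linearly to the whole algebra,
this is Baer's criterion (`AK.injective_of_frob`).

For `r = 0` and `n ≥ 1` the cyclotomic relation reads `1 = 0`, so the algebra is trivial. For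
`r ≥ 1` the Frobenius property is proved by induction on `n`, from `R = H_n` to `S = H_{n+1}`
(`AK.step`, `AK.frob_HH`). With `b_k = T_k⁻¹ ⋯ T_1⁻¹`, `c_n = T_1 ⋯ T_n` and
`p_j = (T_0 - Q_{j-1}) ⋯ (T_0 - Q_0)`, the elements `b_k p_j c_n h`, where `k ≤ n`, `j < r` and
`h ∈ H_n`, span `H_{n+1}`.

* Working out formally how the generators act on these elements gives operators on a direct sum
  of copies of `R`. The point is that these operators satisfy the defining relations
  (`AK.op_rels`), so that `S` acts on that sum; the essential input is a commutator formula between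
  `T_0` and `T_1⁻¹ p_j T_1` (`AK.pp_key`).
* Evaluation of formal combinations in `S` is `S`-equivariant and has `1` in its image
  (`AK.sig_op`, `AK.sig_one`). Hence `S` embeds into the sum by acting on the vector that
  represents `1`; in particular `S` is finite dimensional.
* Reading off the coefficient of `b_n p_{r-1} c_n` in `R` is left `R`-linear. A subset of the sum
  which is stable under the generators and on which this coefficient vanishes is zero
  (`AK.stable_zero`). Composing this coefficient with the form on `R` therefore gives a
  nondegenerate form on `S`.
-/

open scoped TensorProduct

/-- A module is indecomposable if it is nonzero and is not the direct sum of two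
nonzero submodules. -/
def IsIndecomposableModule (A : Type*) (N : Type*) [Ring A] [AddCommGroup N]
    [Module A N] : Prop :=
  Nontrivial N ∧ ∀ P Q : Submodule A N, IsCompl P Q → P = ⊥ ∨ Q = ⊥

/-- A ring `A` is of finite representation type if there are only finitely many
isomorphism classes of finitely generated (equivalently, for a finite dimensional
algebra, finite dimensional) indecomposable right `A`-modules; right `A`-modules are
realized as left modules over `Aᵐᵒᵖ`. -/
def FiniteRepType (A : Type) [Ring A] : Prop :=
  ∃ (k : ℕ) (M : Fin k → ModuleCat.{0} Aᵐᵒᵖ),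
    ∀ (N : Type) [AddCommGroup N] [Module Aᵐᵒᵖ N],
      Module.Finite Aᵐᵒᵖ N → IsIndecomposableModule Aᵐᵒᵖ N →
        ∃ i, Nonempty (N ≃ₗ[Aᵐᵒᵖ] M i)

/-- The defining relations of the Ariki-Koike algebra `H_{n,r}(q, Q_1, ..., Q_r)`,
as a relation on the free algebra on generators `T_0, ..., T_{n-1}`. -/
inductive AKRel (F : Type) [Field F] (n r : ℕ) (q : F) (Q : Fin r → F) :
    FreeAlgebra F (Fin n) → FreeAlgebra F (Fin n) → Prop
  | cyclotomic (h : 0 < n) :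
      AKRel F n r q Q
        (((List.finRange r).map (fun j =>
          FreeAlgebra.ι F (⟨0, h⟩ : Fin n)
            - algebraMap F (FreeAlgebra F (Fin n)) (Q j))).prod) 0
  | braid01 (h : 1 < n) :
      AKRel F n r q Q
        (FreeAlgebra.ι F (⟨0, by omega⟩ : Fin n) * FreeAlgebra.ι F (⟨1, h⟩ : Fin n) *
          FreeAlgebra.ι F (⟨0, by omega⟩ : Fin n) * FreeAlgebra.ι F (⟨1, h⟩ : Fin n))
        (FreeAlgebra.ι F (⟨1, h⟩ : Fin n) * FreeAlgebra.ι F (⟨0, by omega⟩ : Fin n) *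
          FreeAlgebra.ι F (⟨1, h⟩ : Fin n) * FreeAlgebra.ι F (⟨0, by omega⟩ : Fin n))
  | quadratic (i : ℕ) (h1 : 1 ≤ i) (h2 : i < n) :
      AKRel F n r q Q
        ((FreeAlgebra.ι F (⟨i, h2⟩ : Fin n) + 1) *
          (FreeAlgebra.ι F (⟨i, h2⟩ : Fin n) - algebraMap F (FreeAlgebra F (Fin n)) q)) 0
  | braid (i : ℕ) (h1 : 1 ≤ i) (h2 : i + 1 < n) :
      AKRel F n r q Q
        (FreeAlgebra.ι F (⟨i, by omega⟩ : Fin n) * FreeAlgebra.ι F (⟨i + 1, h2⟩ : Fin n) *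
          FreeAlgebra.ι F (⟨i, by omega⟩ : Fin n))
        (FreeAlgebra.ι F (⟨i + 1, h2⟩ : Fin n) * FreeAlgebra.ι F (⟨i, by omega⟩ : Fin n) *
          FreeAlgebra.ι F (⟨i + 1, h2⟩ : Fin n))
  | comm (i j : ℕ) (hij : i + 2 ≤ j) (hj : j < n) :
      AKRel F n r q Q
        (FreeAlgebra.ι F (⟨i, by omega⟩ : Fin n) * FreeAlgebra.ι F (⟨j, hj⟩ : Fin n))
        (FreeAlgebra.ι F (⟨j, hj⟩ : Fin n) * FreeAlgebra.ι F (⟨i, by omega⟩ : Fin n))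

/-- The Ariki-Koike algebra `H_{n,r}(q, Q_1, ..., Q_r)`: the quotient of the free
`F`-algebra on `T_0, ..., T_{n-1}` by the two-sided ideal generated by the defining
relations. -/
abbrev ArikiKoike (F : Type) [Field F] (n r : ℕ) (q : F) (Q : Fin r → F) : Type :=
  RingQuot (AKRel F n r q Q)

/-- The extension of the nondecreasing rearrangement `f'_1 ≤ ... ≤ f'_r` (0-indexed)
by `f'_{r+i} = e + f'_i`. -/
noncomputable def extSeq (e r : ℕ) (f' : Fin r → ℕ) (i : ℕ) : ℕ :=
  if hr : 0 < r then e * (i / r) + f' ⟨i % r, Nat.mod_lt i hr⟩ else 0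

/-- `f^{+1}(Q_1, ..., Q_r) = min { f'_{i+1} - f'_i | 1 ≤ i ≤ r }` (0-indexed here). -/
noncomputable def fPlusOne (e r : ℕ) (f' : Fin r → ℕ) : ℕ :=
  sInf {d | ∃ i < r, d = extSeq e r f' (i + 1) - extSeq e r f' i}

/-- `f^{+2}(Q_1, ..., Q_r) = min { f'_{i+2} - f'_i | 1 ≤ i ≤ r }` (0-indexed here). -/
noncomputable def fPlusTwo (e r : ℕ) (f' : Fin r → ℕ) : ℕ :=
  sInf {d | ∃ i < r, d = extSeq e r f' (i + 2) - extSeq e r f' i}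

/-- `g(Q_1, ..., Q_r) = min { g'_i + g'_j | 1 ≤ i ≠ j ≤ r }` where
`g'_i = f'_{i+1} - f'_i` (0-indexed here). -/
noncomputable def gMin (e r : ℕ) (f' : Fin r → ℕ) : ℕ :=
  sInf {d | ∃ i < r, ∃ j < r, i ≠ j ∧
    d = (extSeq e r f' (i + 1) - extSeq e r f' i)
      + (extSeq e r f' (j + 1) - extSeq e r f' j)}

namespace AK

variable {F : Type} [Field F]

/-! ### The relations and the elements `b_k` -/

/-- The partial products `p_j = (u - Q_{j-1}) ⋯ (u - Q_0)` of the cyclotomic polynomial at `u`. -/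
def pp {A : Type} [Ring A] [Algebra F A] (Q : ℕ → F) (u : A) : ℕ → A
  | 0 => 1
  | j + 1 => (u - Q j • 1) * pp Q u j

/-- The family `T` satisfies the relations of the Ariki–Koike algebra with `n` generators and the
`r` parameters `Q 0, …, Q (r - 1)`. Families are indexed by `ℕ`, and entries from `n` on are
unconstrained. The quadratic relation is written in expanded form. -/
structure Rels {A : Type} [Ring A] [Algebra F A] (n r : ℕ) (q : F) (Q : ℕ → F)
    (T : ℕ → A) : Prop where
  quad : ∀ i, 1 ≤ i → i < n → T i * T i = (q - 1) • T i + q • 1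
  braid : ∀ i, 1 ≤ i → i + 1 < n → T i * T (i + 1) * T i = T (i + 1) * T i * T (i + 1)
  comm : ∀ i j, i + 2 ≤ j → j < n → T i * T j = T j * T i
  braid01 : 1 < n → T 0 * T 1 * T 0 * T 1 = T 1 * T 0 * T 1 * T 0
  cyc : 0 < n → pp Q (T 0) r = 0

section General

variable {A : Type} [Ring A] [Algebra F A]

/-- The inverse of `t` when `(t + 1) * (t - q) = 0` and `q ≠ 0`. -/
def inv (q : F) (t : A) : A := q⁻¹ • (t - (q - 1) • 1)

/-- `b_k = T_k⁻¹ ⋯ T_1⁻¹`. -/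
def BB (q : F) (T : ℕ → A) : ℕ → A
  | 0 => 1
  | k + 1 => inv q (T (k + 1)) * BB q T k

lemma inv_mul {q : F} (hq : q ≠ 0) {t : A} (h : t * t = (q - 1) • t + q • 1) :
    inv q t * t = 1 := by
  simp only [inv, smul_mul_assoc, sub_mul, h, one_mul, add_sub_cancel_left, smul_smul,
    inv_mul_cancel₀ hq, one_smul]

lemma mul_inv {q : F} (hq : q ≠ 0) {t : A} (h : t * t = (q - 1) • t + q • 1) :
    t * inv q t = 1 := by
  simp only [inv, mul_smul_comm, mul_sub, h, mul_one, add_sub_cancel_left, smul_smul,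
    inv_mul_cancel₀ hq, one_smul]

lemma inv_comm {q : F} {t a : A} (h : t * a = a * t) : inv q t * a = a * inv q t := by
  simp only [inv, mul_smul_comm, mul_sub, h, smul_mul_assoc, sub_mul, mul_one, one_mul]

/-- `t = q t⁻¹ + (q - 1)` -/
lemma eq_inv {q : F} (hq : q ≠ 0) (t : A) : t = q • inv q t + (q - 1) • 1 := by
  simp [inv, smul_smul, hq]

lemma pp_comm (Q : ℕ → F) {u a : A} (h : u * a = a * u) (j : ℕ) :
    pp Q u j * a = a * pp Q u j := by
  induction j with
  | zero => simp [pp]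
  | succ j ih =>
    simp only [pp]
    rw [mul_assoc, ih, ← mul_assoc, ← mul_assoc]
    congr 1
    simp [sub_mul, mul_sub, h]

/-- The commutator of `u` and `s⁻¹ p_j(u) s`, for `s` a root of the quadratic relation satisfying the
type `B` braid relation with `u`. -/
lemma pp_key {q : F} (hq : q ≠ 0) (Q : ℕ → F) {u s : A} (h : s * s = (q - 1) • s + q • 1)
    (hb : u * s * u * s = s * u * s * u) (j : ℕ) :
    u * inv q s * pp Q u j * s - inv q s * pp Q u j * s * u =
      (1 - q⁻¹) • (u * s * pp Q u j - u * pp Q u j * s) := by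
  have h1 : inv q s * s = 1 := inv_mul hq h
  have h2 : s * inv q s = 1 := mul_inv hq h
  have hs : inv q s * u * s * u = u * s * u * inv q s := by
    have : inv q s * (u * s * u * s) * inv q s = inv q s * (s * u * s * u) * inv q s := by rw [hb]
    calc inv q s * u * s * u = inv q s * (u * s * u * s) * inv q s := by
          simp only [mul_assoc, h2, mul_one]
      _ = _ := by rw [this]; simp only [← mul_assoc, h1, one_mul]
  induction j with
  | zero =>
    simp only [pp, mul_one]
    rw [mul_assoc, h1]; simp
  | succ j ih =>
    simp only [pp]
    -- the formula is linear in `p_j`, so multiplying `p_j` by `u` is the essential case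
    have hz : pp Q u j * u = u * pp Q u j := pp_comm Q rfl j
    generalize pp Q u j = z at *
    generalize hs' : inv q s = s' at *
    have hu : u * s' * (u * z) * s - s' * (u * z) * s * u =
      (1 - q⁻¹) • (u * s * (u * z) - u * (u * z) * s) := by
      have e1 : u * s' * u * s - s' * u * s * u = (1 - q⁻¹) • (u * s * u - u * u * s) := by
        have a1 : u * s' = q⁻¹ • (u * s) - (1 - q⁻¹) • u := by
          rw [← hs', inv, mul_smul_comm, mul_sub, smul_sub, mul_smul_comm, mul_one, smul_smul]
          congr 2; field_simp
        have a2 : u * s * u * s' = q⁻¹ • (u * s * u * s) - (1 - q⁻¹) • (u * s * u) := by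
          rw [← hs', inv, mul_smul_comm, mul_sub, smul_sub, mul_smul_comm, mul_one, smul_smul]
          congr 2; field_simp
        rw [hs, a2, a1]
        simp only [sub_mul, smul_mul_assoc]
        module
      have e2 : u * s' * (u * z) * s - s' * (u * z) * s * u =
          (u * s' * u * s - s' * u * s * u) * (s' * z * s)
          + s' * u * s * (u * s' * z * s - s' * z * s * u) := by
        have : ∀ w : A, s * (s' * w) = w := fun w => by rw [← mul_assoc, h2, one_mul]
        simp only [sub_mul, mul_sub, mul_assoc, this]
        abel
      rw [e2, e1, ih]
      have e3 : u * s * u * (s' * z * s) = s' * u * s * (u * z * s) := by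
        rw [← mul_assoc, ← mul_assoc, ← hs]; simp only [mul_assoc]
      have e4 : s' * u * s * (u * s * z) = u * s * (u * z) := by
        have : s' * (u * s * u * s) * z = s' * (s * u * s * u) * z := by rw [hb]
        rw [show s' * u * s * (u * s * z) = s' * (u * s * u * s) * z by simp only [mul_assoc], this]
        simp only [← mul_assoc, h1, one_mul]
      have e5 : u * u * s * (s' * z * s) = u * (u * z) * s := by
        have : ∀ w : A, s * (s' * w) = w := fun w => by rw [← mul_assoc, h2, one_mul]
        simp only [mul_assoc, this]
      simp only [smul_mul_assoc, mul_smul_comm, sub_mul, mul_sub, e3, e4, e5]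
      module
    simp only [sub_mul, mul_sub, smul_mul_assoc, one_mul, mul_smul_comm] at hu ⊢
    linear_combination (norm := module) hu - (Q j) • ih

variable {n r : ℕ} {q : F} {Q : ℕ → F} {T : ℕ → A}

lemma Rels.mono (h : Rels (n + 1) r q Q T) : Rels n r q Q T where
  quad i a b := h.quad i a (by omega)
  braid i a b := h.braid i a (by omega)
  comm i j a b := h.comm i j a (by omega)
  braid01 a := h.braid01 (by omega)
  cyc a := h.cyc (by omega)

lemma T_BB_self (hq : q ≠ 0) (h : Rels n r q Q T) {k : ℕ} (hk : k + 1 < n) :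
    T (k + 1) * BB q T (k + 1) = BB q T k := by
  rw [BB, ← mul_assoc, mul_inv hq (h.quad _ (by omega) hk), one_mul]

lemma T_BB_succ (hq : q ≠ 0) {k : ℕ} :
    T (k + 1) * BB q T k = q • BB q T (k + 1) + (q - 1) • BB q T k := by
  conv_lhs => rw [eq_inv hq (T (k + 1))]
  simp [BB, add_mul]

lemma T_BB_gt (h : Rels n r q Q T) {k i : ℕ} (hi : i < n) (hk : k + 2 ≤ i) :
    T i * BB q T k = BB q T k * T i := by
  induction k with
  | zero => simp [BB]
  | succ k ih =>
    rw [BB, ← mul_assoc, ← inv_comm (h.comm (k+1) i (by omega) hi), mul_assoc, ih (by omega),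
      mul_assoc]

lemma inv_braid (hq : q ≠ 0) {a b : A} (ha : a * a = (q - 1) • a + q • 1)
    (hb : b * b = (q - 1) • b + q • 1) (h : a * b * a = b * a * b) :
    a * inv q b * inv q a = inv q b * inv q a * b := by
  have : a * b * a * inv q b = b * a := by
    rw [h, mul_assoc, mul_inv hq hb, mul_one]
  have h2 : inv q b * inv q a * (a * b * a * inv q b) * inv q a =
      inv q b * inv q a * (b * a) * inv q a := by rw [this]
  have e1 : ∀ w : A, inv q a * (a * w) = w := fun w => by rw [← mul_assoc, inv_mul hq ha, one_mul]
  have e2 : ∀ w : A, inv q b * (b * w) = w := fun w => by rw [← mul_assoc, inv_mul hq hb, one_mul]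
  simp only [mul_assoc, e1, e2, mul_inv hq ha, mul_one] at h2
  simp only [mul_assoc, h2]

lemma inv_comm_aux (h : Rels n r q Q T) {k i : ℕ} (hk : k + 1 < n) (hik : i < k) :
    T i * inv q (T (k+1)) = inv q (T (k+1)) * T i := by
  rw [inv_comm (h.comm i (k+1) (by omega) hk).symm]

/-- Conjugation by `b_k` shifts the index `i` up by one. -/
lemma T_BB_lt (hq : q ≠ 0) (h : Rels n r q Q T) {k i : ℕ} (hk : k < n) (hi : 1 ≤ i) (hik : i < k) :
    T i * BB q T k = BB q T k * T (i + 1) := by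
  induction k with
  | zero => omega
  | succ k ih =>
    rcases Nat.lt_or_ge i k with h1 | h1
    · rw [BB, ← mul_assoc, inv_comm_aux h hk h1, mul_assoc, ih (by omega) h1, mul_assoc]
    · obtain rfl : i = k := by omega
      obtain ⟨i, rfl⟩ : ∃ j, i = j + 1 := ⟨i - 1, by omega⟩
      have := inv_braid hq (h.quad (i+1) (by omega) (by omega)) (h.quad (i+2) (by omega) (by omega))
        (h.braid (i+1) (by omega) (by omega))
      rw [BB, BB, ← mul_assoc, ← mul_assoc, this, mul_assoc, T_BB_gt h (by omega) (by omega)]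
      simp only [mul_assoc]
end General

/-! ### The module spanned by the `p_j` -/

section NN

variable {R : Type} [Ring R] [Algebra F R] {r : ℕ}

/-- Left multiplication by `T_0` on formal combinations `∑ p_j v_j` with coefficients in `R`,
where `T_0 p_j = p_{j+1} + Q_j p_j` and the product of all factors is zero. -/
def xN (Q : ℕ → F) : (Fin (r + 1) → R) →ₗ[F] (Fin (r + 1) → R) where
  toFun v j := (Fin.cases 0 (fun i => v i.castSucc) j : R) + Q j • v j
  map_add' v w := by
    ext j
    refine Fin.cases ?_ (fun i => ?_) j
    · simp
    · simp; abel
  map_smul' a v := by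
    ext j
    refine Fin.cases ?_ (fun i => ?_) j <;> simp [smul_comm a]

@[simp] lemma xN_zero (Q : ℕ → F) (v : Fin (r + 1) → R) : xN Q v 0 = Q 0 • v 0 := by
  simp [xN]

@[simp] lemma xN_succ (Q : ℕ → F) (v : Fin (r + 1) → R) (i : Fin r) :
    xN Q v i.succ = v i.castSucc + Q (i + 1) • v i.succ := by
  simp [xN]

lemma xN_smul (Q : ℕ → F) (a : R) (v : Fin (r + 1) → R) : xN Q (a • v) = a • xN Q v := by
  ext j
  refine Fin.cases ?_ (fun i => ?_) j <;> simp [mul_add]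

/-- The inclusion of `R` as the coefficients of `p_0 = 1`. -/
def iN : R →ₗ[F] (Fin (r + 1) → R) := LinearMap.single F (fun _ : Fin (r + 1) => R) 0

lemma iN_smul (a h : R) : (iN (F := F) (a * h) : Fin (r + 1) → R) = a • iN (F := F) h := by
  ext j
  by_cases hj : j = 0 <;> simp [iN, hj]

variable {A : Type} [Ring A] [Algebra F A]

/-- Evaluation of a formal combination `∑ p_j m_j` at an element `u`, with coefficients mapped by `φ`. -/
def eN (Q : ℕ → F) (u : A) (φ : R →ₗ[F] A) : (Fin (r + 1) → R) →ₗ[F] A :=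
  ∑ j : Fin (r + 1), LinearMap.mulLeft F (pp Q u j) ∘ₗ φ ∘ₗ LinearMap.proj j

lemma eN_apply (Q : ℕ → F) (u : A) (φ : R →ₗ[F] A) (m : Fin (r + 1) → R) :
    eN Q u φ m = ∑ j : Fin (r + 1), pp Q u j * φ (m j) := by
  simp [eN]

lemma eN_x (Q : ℕ → F) (u : A) (hu : pp Q u (r + 1) = 0) (φ : R →ₗ[F] A) (m : Fin (r + 1) → R) :
    eN Q u φ (xN Q m) = u * eN Q u φ m := by
  have h1 : ∀ j : ℕ, u * pp Q u j = pp Q u (j + 1) + Q j • pp Q u j := by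
    intro j; simp [pp, sub_mul]
  rw [eN_apply, eN_apply, Finset.mul_sum]
  simp_rw [← mul_assoc, h1, add_mul, Finset.sum_add_distrib]
  conv_rhs => rw [Fin.sum_univ_castSucc]
  conv_lhs => rw [Fin.sum_univ_succ]
  simp only [Fin.val_last, hu, zero_mul, add_zero, xN_zero, xN_succ, map_add, mul_add, map_smul,
    Fin.val_castSucc, Fin.val_succ, Finset.sum_add_distrib, smul_mul_assoc, mul_smul_comm]
  rw [Fin.sum_univ_succ (f := fun x : Fin (r+1) => Q x • (pp Q u x * φ (m x)))]
  simp
  abel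

lemma eN_smul (Q : ℕ → F) (u : R) (a : R) (h : u * a = a * u) (m : Fin (r + 1) → R) :
    eN Q u LinearMap.id (a • m) = a * eN Q u LinearMap.id m := by
  simp only [eN_apply, Finset.mul_sum, LinearMap.id_apply, Pi.smul_apply, smul_eq_mul]
  refine Finset.sum_congr rfl fun j _ => ?_
  rw [← mul_assoc, ← mul_assoc, pp_comm Q h]

lemma eN_iN (Q : ℕ → F) (u : A) (φ : R →ₗ[F] A) (h : R) :
    eN (r := r) Q u φ (iN (F := F) h) = φ h := by
  rw [eN_apply, Finset.sum_eq_single 0]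
  · simp [iN, pp]
  · intro b _ hb; simp [iN, hb]
  · simp

/-- The difference between a formal combination evaluated at `u` (as a multiple of `p_0`) and the
combination itself. -/
def dN (Q : ℕ → F) (u : R) : (Fin (r + 1) → R) →ₗ[F] (Fin (r + 1) → R) :=
  iN ∘ₗ eN Q u LinearMap.id - LinearMap.id

lemma dN_apply (Q : ℕ → F) (u : R) (m : Fin (r + 1) → R) :
    dN Q u m = iN (F := F) (eN Q u LinearMap.id m) - m := rfl

lemma dN_smul (Q : ℕ → F) (u : R) (a : R) (h : u * a = a * u) (m : Fin (r + 1) → R) :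
    dN Q u (a • m) = a • dN Q u m := by
  rw [dN_apply, dN_apply, eN_smul Q u a h, iN_smul, smul_sub]

lemma eN_x_dN (Q : ℕ → F) (u : R) (hu : pp Q u (r + 1) = 0) (m : Fin (r + 1) → R) :
    eN Q u LinearMap.id (xN Q (dN Q u m)) = 0 := by
  rw [eN_x Q u hu, dN_apply, map_sub, eN_iN]
  simp

/-- Replacing `T_0` by `u` changes a formal combination by a multiple of `u - T_0`. This is what
makes the cyclotomic relation for `opU` telescope. -/
lemma dN_range (Q : ℕ → F) (u : R) (m : Fin (r + 1) → R) :
    ∃ D, dN Q u m = u • D - xN Q D := by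
  let φ : (Fin (r + 1) → R) →ₗ[F] (Fin (r + 1) → R) := Algebra.lsmul F F _ u - xN Q
  suffices h : dN Q u m ∈ LinearMap.range φ by
    obtain ⟨D, hD⟩ := h
    exact ⟨D, by rw [← hD]; rfl⟩
  have hs : ∀ (j : ℕ) (hj : j < r + 1) (h : R),
      iN (F := F) (pp Q u j * h) - Pi.single (⟨j, hj⟩ : Fin (r + 1)) h ∈ LinearMap.range φ := by
    intro j
    induction j with
    | zero =>
      intro hj h
      simp [pp, iN]
    | succ j ih =>
      intro hj h
      obtain ⟨D, hD⟩ := ih (by omega) h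
      refine ⟨iN (F := F) (pp Q u j * h) + (xN Q D - Q j • D), ?_⟩
      have e1 : (Pi.single (⟨j + 1, hj⟩ : Fin (r + 1)) h : Fin (r + 1) → R) =
          xN Q (Pi.single (⟨j, by omega⟩ : Fin (r + 1)) h)
            - Q j • (Pi.single (⟨j, by omega⟩ : Fin (r + 1)) h : Fin (r + 1) → R) := by
        ext i
        refine Fin.cases ?_ (fun i => ?_) i
        · by_cases h0 : j = 0
          · subst h0; simp [Fin.ext_iff]
          · simp [Fin.ext_iff, h0, Ne.symm h0]
        · by_cases h0 : i = (j : ℕ)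
          · simp [Pi.single_apply, Fin.ext_iff, h0]
          · by_cases h1 : i + 1 = (j : ℕ)
            · simp [Pi.single_apply, Fin.ext_iff, h0, h1]
            · simp [Fin.ext_iff, h0, h1]
      have e2 : (Pi.single (⟨j, by omega⟩ : Fin (r + 1)) h : Fin (r + 1) → R) =
          iN (F := F) (pp Q u j * h) - φ D := by rw [hD]; abel
      rw [e1, e2]
      simp only [φ, pp, sub_mul, smul_mul_assoc, one_mul, mul_assoc, map_sub, map_smul, iN_smul,
        LinearMap.sub_apply, Algebra.lsmul_coe, xN_smul, map_add, smul_sub]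
      abel
  have : dN Q u m = ∑ j : Fin (r + 1), (iN (F := F) (pp Q u j * m j) - Pi.single j (m j)) := by
    rw [dN_apply, eN_apply, map_sum, Finset.sum_sub_distrib, Finset.univ_sum_single]
    rfl
  rw [this]
  exact Submodule.sum_mem _ fun j _ => hs j j.2 _

/-- `T_0` satisfies the cyclotomic relation on formal combinations `∑ p_j m_j`. -/
lemma pp_xN (Q : ℕ → F) (m : Fin (r + 1) → R) :
    pp Q (xN Q : Module.End F (Fin (r + 1) → R)) (r + 1) m = 0 := by
  have : ∀ i (j : Fin (r + 1)), (j : ℕ) < i →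
      pp Q (xN Q : Module.End F (Fin (r + 1) → R)) i m j = 0 := by
    intro i
    induction i with
    | zero => simp
    | succ i ih =>
      intro j
      simp only [pp, Module.End.mul_apply]
      generalize pp Q (xN Q : Module.End F (Fin (r + 1) → R)) i m = w at ih
      refine Fin.cases ?_ (fun j => ?_) j
      · intro hj
        by_cases hi : i = 0
        · subst hi; simp
        · simp [ih 0 (by simp; omega)]
      · intro hj
        have hj : (j : ℕ) < i := by simpa using hj
        have h1 := ih j.castSucc (by simpa using hj)
        by_cases hi : (j : ℕ) + 1 = i
        · subst hi; simp [h1]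
        · simp [h1, ih j.succ (by simp; omega)]
  ext j
  exact this _ j j.2

end NN

/-! ### The action of the generators of `H_{n+1}` on formal combinations -/

section Ops

variable {R : Type} [Ring R] [Algebra F R] {r : ℕ}

/-- Formal combinations `∑ p_j m_j` with coefficients in `R`; there are `r + 1` parameters. -/
abbrev NN (R : Type) (r : ℕ) : Type := Fin (r + 1) → R

/-- Left multiplication by `a` on the coefficients. -/
abbrev lm (a : R) : NN R r →ₗ[F] NN R r := Algebra.lsmul F F (NN R r) a

/-- The action of `T_i`, for `i ≥ 1`, on formal combinations of the elements `b_k p_j c_n h` with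
`k ≤ n` and `h ∈ R`; the `k`-th component holds the coefficients belonging to `b_k`. In degrees
`k > n`, which have no meaning, `T_i` acts by the scalar `q` so that the relations hold there too. -/
noncomputable def opT (n : ℕ) (q : F) (T : ℕ → R) (i : ℕ) : Module.End F (ℕ →₀ NN R r) :=
  Finsupp.lsum F fun k =>
    if n < k then q • Finsupp.lsingle k
    else if k = i then Finsupp.lsingle (i - 1)
    else if k + 1 = i then q • Finsupp.lsingle (k + 1) + (q - 1) • Finsupp.lsingle k
    else if i < k then Finsupp.lsingle k ∘ₗ lm (T i)
    else Finsupp.lsingle k ∘ₗ lm (T (i - 1))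

/-- The action of `T_0` on formal combinations of the elements `b_k p_j c_n h`. The correction term
in degree `0` comes from the commutator formula `pp_key`; compare `U_BB`. In the meaningless
degrees `k > n` it acts by the scalar `Q_0`. -/
noncomputable def opU (n : ℕ) (q : F) (Q : ℕ → F) (T : ℕ → R) : Module.End F (ℕ →₀ NN R r) :=
  Finsupp.lsum F fun k =>
    if n < k then Q 0 • Finsupp.lsingle k
    else if k = 0 then Finsupp.lsingle 0 ∘ₗ xN Q
    else Finsupp.lsingle k ∘ₗ lm (T 0) +
      (1 - q⁻¹) • (Finsupp.lsingle 0 ∘ₗ xN Q ∘ₗ lm (BB q T (k - 1)) ∘ₗ dN Q (T 0))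

/-- The family of operators by which the generators of `H_{n+1}` act. -/
noncomputable def op (n : ℕ) (q : F) (Q : ℕ → F) (T : ℕ → R) : ℕ → Module.End F (ℕ →₀ NN R r)
  | 0 => opU n q Q T
  | i + 1 => opT n q T (i + 1)

variable {n : ℕ} {q : F} {Q : ℕ → F} {T : ℕ → R}

open Finsupp

lemma single_smul_F (a : F) (k : ℕ) (m : NN R r) : single k (a • m) = a • single k m :=
  (smul_single a k m).symm

lemma opT_big {i k : ℕ} (h : n < k) (m : NN R r) :
    opT n q T i (single k m) = q • single k m := by
  simp [opT, h]

lemma opT_self {i : ℕ} (h : i + 1 ≤ n) (m : NN R r) :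
    opT n q T (i + 1) (single (i + 1) m) = single i m := by
  simp [opT, show ¬ n < i + 1 by omega]

lemma opT_pred {i : ℕ} (h : i + 1 ≤ n) (m : NN R r) :
    opT n q T (i + 1) (single i m) = q • single (i + 1) m + (q - 1) • single i m := by
  simp [opT, show ¬ n < i by omega]

lemma opT_lt {i k : ℕ} (h : k ≤ n) (hi : i < k) (m : NN R r) :
    opT n q T i (single k m) = single k (T i • m) := by
  simp [opT, show ¬ n < k by omega, show k ≠ i by omega, show k + 1 ≠ i by omega, hi]

lemma opT_gt {i k : ℕ} (h : k ≤ n) (hi : k < i) (m : NN R r) :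
    opT n q T (i + 1) (single k m) = single k (T i • m) := by
  simp [opT, show ¬ n < k by omega, show k ≠ i + 1 by omega, show k ≠ i by omega,
    show ¬ i + 1 < k by omega]

lemma opU_big {k : ℕ} (h : n < k) (m : NN R r) :
    opU n q Q T (single k m) = Q 0 • single k m := by
  simp [opU, h]

lemma opU_zero (m : NN R r) :
    opU n q Q T (single 0 m) = single 0 (xN Q m) := by
  simp [opU]

lemma opU_succ {k : ℕ} (h : k + 1 ≤ n) (m : NN R r) :
    opU n q Q T (single (k + 1) m) = single (k + 1) (T 0 • m) +
      (1 - q⁻¹) • single 0 (xN Q (BB q T k • dN Q (T 0) m)) := by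
  simp [opU, show ¬ n < k + 1 by omega]

variable (hq : q ≠ 0) (hT : Rels n (r + 1) q Q T)
include hT

lemma op_quad (i : ℕ) (hi : i + 1 ≤ n) :
    opT (r := r) n q T (i + 1) * opT n q T (i + 1) = (q - 1) • opT n q T (i + 1) + q • 1 := by
  refine Finsupp.lhom_ext fun k m => ?_
  simp only [Module.End.mul_apply, LinearMap.add_apply, LinearMap.smul_apply,
    Module.End.one_apply]
  rcases lt_or_ge n k with h | h
  · rw [opT_big h, map_smul, opT_big h]
    module
  rcases lt_trichotomy k (i + 1) with h1 | rfl | h1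
  · rcases Nat.lt_or_ge k i with h2 | h2
    · rw [opT_gt h h2, opT_gt h h2, smul_smul, hT.quad i (by omega) (by omega), add_smul, single_add]
      simp
    · obtain rfl : k = i := by omega
      simp only [opT_pred hi, map_add, map_smul, opT_self hi]
      module
  · rw [opT_self hi, opT_pred hi]
    module
  · rw [opT_lt h h1, opT_lt h h1, smul_smul, hT.quad (i + 1) (by omega) (by omega), add_smul,
      single_add]
    simp

lemma op_braid (i : ℕ) (hi : i + 2 ≤ n) :
    opT (r := r) n q T (i + 1) * opT n q T (i + 2) * opT n q T (i + 1) =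
      opT n q T (i + 2) * opT n q T (i + 1) * opT n q T (i + 2) := by
  refine Finsupp.lhom_ext fun k m => ?_
  simp only [Module.End.mul_apply]
  rcases lt_or_ge n k with h | h
  · simp only [opT_big h, map_smul]
  rcases Nat.lt_or_ge k i with h1 | h1
  · simp only [opT_gt h h1, opT_gt h (show k < i + 1 by omega), smul_smul, ← mul_assoc,
      hT.braid i (by omega) (by omega)]
  rcases Nat.lt_or_ge (i + 2) k with h2 | h2
  · simp only [opT_lt h h2, opT_lt h (show i + 1 < k by omega), smul_smul, ← mul_assoc,
      hT.braid (i + 1) (by omega) (by omega)]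
  have a1 := fun m : NN R r => opT_self (q := q) (T := T) (show i + 1 ≤ n by omega) m
  have a2 := fun m : NN R r => opT_pred (q := q) (T := T) (show i + 1 ≤ n by omega) m
  have a3 := fun m : NN R r => opT_lt (q := q) (T := T) (show i + 2 ≤ n by omega)
    (show i + 1 < i + 2 by omega) m
  have b1 := fun m : NN R r => opT_self (q := q) (T := T) (show i + 1 + 1 ≤ n by omega) m
  have b2 := fun m : NN R r => opT_pred (q := q) (T := T) (show i + 1 + 1 ≤ n by omega) m
  have b3 := fun m : NN R r => opT_gt (q := q) (T := T) (show i ≤ n by omega)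
    (show i < i + 1 by omega) m
  obtain rfl | rfl | rfl : k = i ∨ k = i + 1 ∨ k = i + 2 := by omega
  · simp only [a1, a2, a3, b2, b3, map_add, map_smul, smul_smul,
      hT.quad (k + 1) (by omega) (by omega)]
    simp only [add_smul, smul_assoc, one_smul, single_add, single_smul_F]
    module
  · simp only [a1, a2, a3, b1, b2, b3, map_add, map_smul]
  · simp only [a1, a3, b1, b3]

lemma op_comm (i j : ℕ) (hij : i + 2 ≤ j) (hj : j + 1 ≤ n) :
    opT (r := r) n q T (i + 1) * opT n q T (j + 1) =
      opT n q T (j + 1) * opT n q T (i + 1) := by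
  refine Finsupp.lhom_ext fun k m => ?_
  simp only [Module.End.mul_apply]
  rcases lt_or_ge n k with h | h
  · simp only [opT_big h, map_smul]
  rcases Nat.lt_or_ge k i with h1 | h1
  · simp only [opT_gt h h1, opT_gt h (show k < j by omega), smul_smul,
      hT.comm i j (by omega) (by omega)]
  rcases Nat.lt_or_ge (j + 1) k with h2 | h2
  · simp only [opT_lt h h2, opT_lt h (show i + 1 < k by omega), smul_smul,
      hT.comm (i + 1) (j + 1) (by omega) (by omega)]
  have a1 := fun m : NN R r => opT_self (q := q) (T := T) (show i + 1 ≤ n by omega) m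
  have a2 := fun m : NN R r => opT_pred (q := q) (T := T) (show i + 1 ≤ n by omega) m
  have b1 := fun m : NN R r => opT_self (q := q) (T := T) (show j + 1 ≤ n by omega) m
  have b2 := fun m : NN R r => opT_pred (q := q) (T := T) (show j + 1 ≤ n by omega) m
  have a3 := fun (k : ℕ) (h : k ≤ n) (h' : i + 1 < k) (m : NN R r) =>
    opT_lt (q := q) (T := T) h h' m
  have b3 := fun (k : ℕ) (h : k ≤ n) (h' : k < j) (m : NN R r) =>
    opT_gt (q := q) (T := T) h h' m
  obtain rfl | rfl | h3 | rfl | rfl : k = i ∨ k = i + 1 ∨ (i + 1 < k ∧ k < j) ∨ k = j ∨ k = j + 1 := by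
    omega
  · simp only [a2, b3 k (by omega) (by omega), b3 (k+1) (by omega) (by omega), map_add, map_smul]
  · simp only [a1, b3 (i+1) (by omega) (by omega), b3 i (by omega) (by omega)]
  · simp only [a3 k h h3.1, b3 k h h3.2, smul_smul, hT.comm (i + 1) j (by omega) (by omega)]
  · simp only [b2, a3 k (by omega) (by omega), a3 (k+1) (by omega) (by omega), map_add, map_smul]
  · simp only [b1, a3 (j+1) (by omega) (by omega), a3 j (by omega) (by omega)]

include hq

lemma op_comm0 (j : ℕ) (hj : 1 ≤ j) (hjn : j + 1 ≤ n) :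
    opU (r := r) n q Q T * opT n q T (j + 1) = opT n q T (j + 1) * opU n q Q T := by
  refine Finsupp.lhom_ext fun k m => ?_
  simp only [Module.End.mul_apply]
  rcases lt_or_ge n k with h | h
  · simp only [opT_big h, opU_big h, map_smul]
    rw [smul_comm]
  have c0 := fun m : NN R r => opT_gt (q := q) (T := T) (show 0 ≤ n by omega) (show 0 < j by omega) m
  obtain _ | k := k
  · simp only [opU_zero, c0, xN_smul]
  have u1 := fun m : NN R r => opU_succ (q := q) (Q := Q) (T := T) h m
  rcases Nat.lt_or_ge (k + 1) j with h1 | h1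
  · simp only [opT_gt h h1, u1, c0, map_add, map_smul, smul_smul, ← xN_smul,
      hT.comm 0 j (by omega) (by omega), dN_smul Q (T 0) (T j) (hT.comm 0 j (by omega) (by omega)),
      T_BB_gt hT (show j < n by omega) (show k + 2 ≤ j by omega)]
  rcases Nat.lt_or_ge (j + 1) (k + 1) with h2 | h2
  · have hc := hT.comm 0 (j + 1) (by omega) (by omega)
    simp only [opT_lt h h2, u1, c0, map_add, map_smul, smul_smul, ← xN_smul, hc,
      dN_smul Q (T 0) (T (j + 1)) hc,
      T_BB_lt hq hT (show k < n by omega) (show 1 ≤ j by omega) (by omega)]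
  obtain rfl | rfl : k = j ∨ j = k + 1 := by omega
  · obtain ⟨j, rfl⟩ : ∃ i, k = i + 1 := ⟨k - 1, by omega⟩
    have u2 := fun m : NN R r => opU_succ (q := q) (Q := Q) (T := T) (show j + 1 ≤ n by omega) m
    simp only [opT_self h, u1, u2, c0, map_add, map_smul, smul_smul, ← xN_smul,
      T_BB_self hq hT (show j + 1 < n by omega)]
  · have u2 := fun m : NN R r => opU_succ (q := q) (Q := Q) (T := T) (show k + 1 + 1 ≤ n by omega) m
    simp only [opT_pred hjn, u1, u2, c0, map_add, map_smul, smul_smul, ← xN_smul, T_BB_succ hq]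
    simp only [add_smul, smul_assoc, map_add, map_smul, single_add, single_smul_F]
    module

omit hT in
/-- The commutator formula `pp_key` with `s` on the right-hand side expressed through its inverse. -/
lemma pp_key2 {A : Type} [Ring A] [Algebra F A] {u s : A} (h : s * s = (q - 1) • s + q • 1)
    (hb : u * s * u * s = s * u * s * u) (j : ℕ) :
    u * inv q s * pp Q u j * s - inv q s * pp Q u j * s * u =
      (q - 1) • (u * inv q s * pp Q u j - u * pp Q u j * inv q s) := by
  rw [pp_key hq Q h hb]
  simp only [inv, mul_smul_comm, smul_mul_assoc, mul_sub, sub_mul, mul_one, smul_sub, smul_smul]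
  match_scalars <;> field_simp <;> ring

omit hT in
lemma pp_key3 {A : Type} [Ring A] [Algebra F A] {u s : A} (h : s * s = (q - 1) • s + q • 1)
    (hb : u * s * u * s = s * u * s * u) (j : ℕ) :
    inv q s * pp Q u j * s * u * s + (q - 1) • (u * inv q s * pp Q u j * s - u * pp Q u j) =
      (q - 1) • (inv q s * pp Q u j * s * u) + q • (u * inv q s * pp Q u j) +
      (q - 1) ^ 2 • (u * inv q s * pp Q u j - u * pp Q u j * inv q s) := by
  have k := pp_key2 (Q := Q) hq h hb j
  have k1 : inv q s * pp Q u j * s * u = u * inv q s * pp Q u j * s -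
      (q - 1) • (u * inv q s * pp Q u j - u * pp Q u j * inv q s) := by rw [← k]; abel
  rw [k1]
  have e1 : u * inv q s * pp Q u j * s * s =
      (q - 1) • (u * inv q s * pp Q u j * s) + q • (u * inv q s * pp Q u j) := by
    rw [mul_assoc _ s s, h, mul_add, mul_smul_comm, mul_smul_comm, mul_one]
  have e2 : u * pp Q u j * inv q s * s = u * pp Q u j := by
    rw [mul_assoc _ _ s, inv_mul hq h, mul_one]
  simp only [sub_mul, smul_mul_assoc, e1, e2]
  module

omit hq in
/-- `b_{k+1} = V T_1⁻¹` with `V = T_{k+1}⁻¹ ⋯ T_2⁻¹`, which commutes with `T_0`. -/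
lemma BB_split {k : ℕ} (hk : k + 1 < n) :
    ∃ V, BB q T (k + 1) = V * inv q (T 1) ∧ T 0 * V = V * T 0 := by
  induction k with
  | zero => exact ⟨1, by simp [BB], by simp⟩
  | succ k ih =>
    obtain ⟨V, h1, h2⟩ := ih (by omega)
    refine ⟨inv q (T (k + 2)) * V, by rw [BB, h1, mul_assoc], ?_⟩
    rw [← mul_assoc, ← inv_comm (hT.comm 0 (k + 2) (by omega) (by omega)).symm, mul_assoc, h2,
      mul_assoc]

omit hq in
lemma E_x_W {k : ℕ} {V : R} (hk : k + 1 < n) (hV : T 0 * V = V * T 0) (m : NN R r) :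
    eN Q (T 0) LinearMap.id (xN Q ((V * inv q (T 1)) • dN Q (T 0) m)) =
      V * (T 0 * (inv q (T 1) * eN Q (T 0) LinearMap.id m
        - eN Q (T 0) LinearMap.id (inv q (T 1) • m))) := by
  rw [eN_x Q _ (hT.cyc (by omega)), mul_smul, eN_smul Q _ V hV, ← mul_assoc, hV, mul_assoc,
    dN_apply, smul_sub, map_sub, ← iN_smul, eN_iN]
  rfl

/-- The degree `1` part of the braid relation between `T_0` and `T_1` on the component of `b_{k+2}`. -/
lemma L1 {k : ℕ} (hk : k + 1 < n) (m : NN R r) :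
    T 0 • BB q T (k + 1) • dN Q (T 0) (T 1 • m) =
      BB q T (k + 1) • dN Q (T 0) (T 1 • T 0 • m) +
      (q - 1) • iN (F := F) (eN Q (T 0) LinearMap.id (xN Q (BB q T (k + 1) • dN Q (T 0) m))) := by
  obtain ⟨V, h1, hV⟩ := BB_split (q := q) hT hk
  have hs := hT.quad 1 le_rfl (by omega)
  have key : T 0 * (inv q (T 1) * eN Q (T 0) LinearMap.id (T 1 • m)) =
      inv q (T 1) * eN Q (T 0) LinearMap.id (T 1 • T 0 • m) +
      (q - 1) • (T 0 * (inv q (T 1) * eN Q (T 0) LinearMap.id m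
        - eN Q (T 0) LinearMap.id (inv q (T 1) • m))) := by
    simp only [eN_apply, Finset.mul_sum, ← Finset.sum_sub_distrib, Finset.smul_sum,
      ← Finset.sum_add_distrib]
    refine Finset.sum_congr rfl fun j _ => ?_
    have := congrArg (· * m j) (pp_key2 (Q := Q) hq hs (hT.braid01 (by omega)) j)
    simp only [sub_mul, smul_mul_assoc, mul_assoc] at this
    simp only [LinearMap.id_apply, Pi.smul_apply, smul_eq_mul, mul_sub]
    rw [← this]; abel
  rw [h1, E_x_W hT hk hV, dN_apply, dN_apply, smul_sub, smul_sub, smul_sub, ← iN_smul,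
    ← iN_smul, ← iN_smul]
  have e1 : T 0 • (V * inv q (T 1)) • T 1 • m = (V * inv q (T 1)) • T 1 • T 0 • m := by
    simp only [smul_smul, ← mul_assoc]
    rw [mul_assoc _ _ (T 1), inv_mul hq hs, mul_assoc V _ (T 1), inv_mul hq hs, mul_one, mul_one, hV]
  have e2 : T 0 * (V * inv q (T 1) * eN Q (T 0) LinearMap.id (T 1 • m)) =
      V * (T 0 * (inv q (T 1) * eN Q (T 0) LinearMap.id (T 1 • m))) := by
    simp only [← mul_assoc, hV]
  rw [e1, e2, key, mul_add, map_add, mul_smul_comm, LinearMap.map_smul (iN (F := F)) (q - 1),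
    mul_assoc V]
  abel

/-- The degree `0` part of the braid relation between `T_0` and `T_1` on the component of `b_{k+2}`. -/
lemma L0 {k : ℕ} (hk : k + 1 < n) (m : NN R r) :
    BB q T (k + 1) • dN Q (T 0) (T 1 • T 0 • T 1 • m) +
      (q - 1) • iN (F := F) (eN Q (T 0) LinearMap.id (xN Q (BB q T (k + 1) • dN Q (T 0) (T 1 • m))))
      = (q - 1) • BB q T (k + 1) • dN Q (T 0) (T 1 • T 0 • m) +
      q • T 0 • BB q T (k + 1) • dN Q (T 0) m +
      (q - 1) ^ 2 • iN (F := F) (eN Q (T 0) LinearMap.id (xN Q (BB q T (k + 1) • dN Q (T 0) m))) := by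
  obtain ⟨V, h1, hV⟩ := BB_split (q := q) hT hk
  have hs := hT.quad 1 le_rfl (by omega)
  have key : inv q (T 1) * eN Q (T 0) LinearMap.id (T 1 • T 0 • T 1 • m) +
      (q - 1) • (T 0 * (inv q (T 1) * eN Q (T 0) LinearMap.id (T 1 • m)
        - eN Q (T 0) LinearMap.id (inv q (T 1) • T 1 • m))) =
      (q - 1) • (inv q (T 1) * eN Q (T 0) LinearMap.id (T 1 • T 0 • m)) +
      q • (T 0 * (inv q (T 1) * eN Q (T 0) LinearMap.id m)) +
      (q - 1) ^ 2 • (T 0 * (inv q (T 1) * eN Q (T 0) LinearMap.id m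
        - eN Q (T 0) LinearMap.id (inv q (T 1) • m))) := by
    simp only [eN_apply, Finset.mul_sum, ← Finset.sum_sub_distrib, Finset.smul_sum,
      ← Finset.sum_add_distrib]
    refine Finset.sum_congr rfl fun j _ => ?_
    have := congrArg (· * m j) (pp_key3 (Q := Q) hq hs (hT.braid01 (by omega)) j)
    simp only [sub_mul, add_mul, smul_mul_assoc, mul_assoc] at this
    have e : ∀ w, inv q (T 1) * (T 1 * w) = w := fun w => by rw [← mul_assoc, inv_mul hq hs, one_mul]
    simp only [LinearMap.id_apply, Pi.smul_apply, smul_eq_mul, mul_sub, e]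
    exact this
  rw [h1, E_x_W hT hk hV, E_x_W hT hk hV]
  simp only [dN_apply, smul_sub, ← iN_smul]
  have e1 : (V * inv q (T 1)) • T 1 • T 0 • T 1 • m =
      (q - 1) • (V * inv q (T 1)) • T 1 • T 0 • m + q • T 0 • (V * inv q (T 1)) • m := by
    have hx : V * inv q (T 1) * T 1 = V := by rw [mul_assoc, inv_mul hq hs, mul_one]
    simp only [smul_smul, ← mul_assoc, hx]
    conv_lhs => rw [eq_inv hq (T 1)]
    simp only [mul_add, mul_smul_comm, mul_one, add_smul, smul_assoc, hV]
    abel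
  have e2 : T 0 * (V * inv q (T 1) * eN Q (T 0) LinearMap.id m) =
      V * (T 0 * (inv q (T 1) * eN Q (T 0) LinearMap.id m)) := by
    simp only [← mul_assoc, hV]
  have key' := congrArg (fun w => (iN (F := F) (V * w) : NN R r)) key
  simp only [mul_add, map_add, mul_smul_comm, map_smul] at key'
  rw [e1, e2, mul_assoc V, mul_assoc V]
  generalize (V * inv q (T 1)) • T 1 • T 0 • m = X1 at *
  generalize T 0 • (V * inv q (T 1)) • m = X2 at *
  linear_combination (norm := module) key'

omit hT in
lemma opU_opT_zero (hn : 1 ≤ n) (m : NN R r) :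
    opU n q Q T (opT n q T 1 (single 0 m)) = q • single 1 (T 0 • m) +
      (q - 1) • single 0 (xN Q (iN (F := F) (eN Q (T 0) LinearMap.id m))) := by
  rw [opT_pred (i := 0) hn, map_add, map_smul, map_smul, opU_zero, opU_succ (k := 0) hn, BB,
    one_smul, dN_apply, map_sub, single_sub]
  match_scalars <;> field_simp <;> ring

lemma op_braid01 (hn : 1 ≤ n) :
    opU (r := r) n q Q T * opT n q T 1 * opU n q Q T * opT n q T 1 =
      opT n q T 1 * opU n q Q T * opT n q T 1 * opU n q Q T := by
  refine Finsupp.lhom_ext fun k m => ?_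
  simp only [Module.End.mul_apply]
  rcases lt_or_ge n k with h | h
  · simp only [opT_big h, opU_big h, map_smul]
    simp only [smul_smul]; congr 1; ring
  have a0 := fun m : NN R r => opT_self (q := q) (T := T) (i := 0) hn m
  have a1 := fun m : NN R r => opT_pred (q := q) (T := T) (i := 0) hn m
  have u1 := fun m : NN R r => opU_succ (q := q) (Q := Q) (T := T) (k := 0) hn m
  have ut := fun m : NN R r => opU_opT_zero (q := q) (Q := Q) (T := T) hq hn m
  have hu := hT.cyc hn
  have ei : ∀ m : NN R r, eN Q (T 0) LinearMap.id (xN Q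
      (iN (F := F) (eN Q (T 0) LinearMap.id m) : NN R r)) = T 0 * eN Q (T 0) LinearMap.id m := by
    intro m; rw [eN_x Q _ hu, eN_iN]; rfl
  simp only [zero_add] at a0 a1 u1
  have f1 := fun m : NN R r => eN_smul Q (T 0) (T 0) rfl m
  have f2 := fun m : NN R r => eN_x Q (T 0) hu LinearMap.id m
  match k, h with
  | 0, _ =>
    simp only [opU_zero, ut, map_add, (opT n q T 1).map_smul, a0, (opU n q Q T).map_smul, ei, f2]
    simp only [a1, iN_smul, xN_smul, smul_add]

  | 1, _ =>
    rw [a0, opU_zero, ut, u1]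
    simp only [opU_zero, ut, map_add, (opT n q T 1).map_smul, a0, (opU n q Q T).map_smul, BB,
      one_smul, eN_x_dN Q (T 0) hu, map_zero, single_zero, smul_zero, add_zero, f2]
    simp only [a1, iN_smul, xN_smul, dN_apply, smul_sub, map_sub, single_sub]
    match_scalars <;> field_simp <;> ring
  | k + 2, h =>
    have b1 := fun m : NN R r => opT_lt (q := q) (T := T) h (show 1 < k + 2 by omega) m
    have b2 := fun m : NN R r => opU_succ (q := q) (Q := Q) (T := T) h m
    simp only [b1, b2, map_add, (opT n q T 1).map_smul, (opU n q Q T).map_smul, ut, a0]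
    simp only [a1]
    have hb := hT.braid01 (by omega)
    have l0 := congrArg (fun w => (single 0 (xN Q w) : ℕ →₀ NN R r)) (L0 hq hT (k := k) (by omega) m)
    have l1 := congrArg (fun w => (single 1 (xN Q w) : ℕ →₀ NN R r)) (L1 hq hT (k := k) (by omega) m)
    simp only [map_add, single_add, map_smul, single_smul_F] at l0 l1
    have l2 : (single (k + 2) (T 0 • T 1 • T 0 • T 1 • m) : ℕ →₀ NN R r) =
       single (k + 2) (T 1 • T 0 • T 1 • T 0 • m) := by
      simp only [smul_smul, ← mul_assoc, hb]
    simp only [← xN_smul]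
    linear_combination (norm := skip) l2 + (1 - q⁻¹) • l0 + ((1 - q⁻¹) * q) • l1
    match_scalars <;> field_simp <;> ring

omit hT hq in
lemma pp_opU_zero (i : ℕ) (m : NN R r) :
    pp Q (opU n q Q T) i (single 0 m) =
      single 0 (pp Q (xN Q : Module.End F (NN R r)) i m) := by
  induction i with
  | zero => simp [pp]
  | succ i ih =>
    simp only [pp, Module.End.mul_apply, ih, LinearMap.sub_apply, opU_zero, LinearMap.smul_apply,
      Module.End.one_apply, single_sub, single_smul_F]

omit hT hq in
lemma pp_opU_big {k : ℕ} (h : n < k) (i : ℕ) (m : NN R r) :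
    pp Q (opU n q Q T) (i + 1) (single k m) = 0 := by
  induction i with
  | zero => simp [pp, opU_big h]
  | succ i ih => rw [pp, Module.End.mul_apply, ih, map_zero]

omit hT hq in
/-- The action of `p_i` on the component of `b_{k+1}`, given a witness `D` as in `dN_range`. For
`i = r + 1` the right-hand side vanishes as soon as `T 0` satisfies the cyclotomic relation. -/
lemma pp_opU_succ {k : ℕ} (h : k + 1 ≤ n) (m D : NN R r) (hD : dN Q (T 0) m = T 0 • D - xN Q D)
    (i : ℕ) :
    pp Q (opU n q Q T) i (single (k + 1) m) = single (k + 1) (pp Q (T 0) i • m) +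
      (1 - q⁻¹) • single 0 (xN Q (BB q T k • (pp Q (T 0) i • D -
        pp Q (xN Q : Module.End F (NN R r)) i D))) := by
  induction i with
  | zero => simp [pp]
  | succ i ih =>
    have hc : pp Q (T 0) i * T 0 = T 0 * pp Q (T 0) i := pp_comm Q rfl i
    rw [pp, Module.End.mul_apply, ih]
    simp only [LinearMap.sub_apply, LinearMap.smul_apply, Module.End.one_apply, map_add, map_smul,
      opU_zero, opU_succ h, dN_smul Q (T 0) (pp Q (T 0) i) hc.symm, hD]
    simp only [pp, Module.End.mul_apply, LinearMap.sub_apply, LinearMap.smul_apply, hc,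
      map_sub, smul_sub, single_sub, sub_smul, smul_smul, sub_mul,
      smul_mul_assoc, one_mul, smul_assoc, map_smul, single_smul_F, xN_smul]
    simp only [← smul_smul]
    have : ∀ (a : F) (b : R) (m : NN R r), b • a • m = a • b • m := fun a b m => smul_comm _ _ _
    simp only [this, single_smul_F]
    module

omit hq in
lemma op_cyc : pp Q (opU n q Q T) (r + 1) = (0 : Module.End F (ℕ →₀ NN R r)) := by
  refine Finsupp.lhom_ext fun k m => ?_
  rw [LinearMap.zero_apply]
  rcases lt_or_ge n k with h | h
  · exact pp_opU_big h _ _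
  obtain _ | k := k
  · rw [pp_opU_zero, pp_xN, single_zero]
  · obtain ⟨D, hD⟩ := dN_range Q (T 0) m
    rw [pp_opU_succ h m D hD, hT.cyc (by omega), pp_xN]
    simp

/-- If `T` satisfies the relations of `H_n`, then the operators `op` satisfy those of `H_{n+1}`. -/
lemma op_rels : Rels (n + 1) (r + 1) q Q (op (r := r) n q Q T) where
  quad i h1 h2 := by
    obtain ⟨i, rfl⟩ : ∃ j, i = j + 1 := ⟨i - 1, by omega⟩
    exact op_quad hT i (by omega)
  braid i h1 h2 := by
    obtain ⟨i, rfl⟩ : ∃ j, i = j + 1 := ⟨i - 1, by omega⟩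
    exact op_braid hT i (by omega)
  comm i j h1 h2 := by
    obtain ⟨j, rfl⟩ : ∃ k, j = k + 1 := ⟨j - 1, by omega⟩
    obtain _ | i := i
    · exact op_comm0 hq hT j (by omega) (by omega)
    · exact op_comm hT i j (by omega) (by omega)
  braid01 h := op_braid01 hq hT (by omega)
  cyc _ := op_cyc hT

end Ops

/-! ### The elements `c_n` -/

section General2

variable {A : Type} [Ring A] [Algebra F A] {n r : ℕ} {q : F} {Q : ℕ → F} {T : ℕ → A}

/-- `c_k = T_1 ⋯ T_k`, the inverse of `b_k`. -/
def CC (T : ℕ → A) : ℕ → A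
  | 0 => 1
  | k + 1 => CC T k * T (k + 1)

lemma BB_CC (hq : q ≠ 0) (h : Rels n r q Q T) {k : ℕ} (hk : k < n) : BB q T k * CC T k = 1 := by
  induction k with
  | zero => simp [BB, CC]
  | succ k ih =>
    rw [BB, CC, mul_assoc, ← mul_assoc (BB q T k), ih (by omega), one_mul,
      inv_mul hq (h.quad _ (by omega) hk)]

lemma T_CC_gt (h : Rels n r q Q T) {k i : ℕ} (hi : i < n) (hk : k + 2 ≤ i) :
    T i * CC T k = CC T k * T i := by
  induction k with
  | zero => simp [CC]
  | succ k ih =>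
    rw [CC, ← mul_assoc, ih (by omega), mul_assoc, ← h.comm (k + 1) i (by omega) hi, mul_assoc]

/-- Conjugation by `c_k` shifts the index `i` down by one. -/
lemma T_CC (h : Rels n r q Q T) {k i : ℕ} (hk : k < n) (hi : 1 ≤ i) (hik : i < k) :
    T (i + 1) * CC T k = CC T k * T i := by
  induction k with
  | zero => omega
  | succ k ih =>
    rcases Nat.lt_or_ge i k with h1 | h1
    · rw [CC, ← mul_assoc, ih (by omega) h1, mul_assoc, h.comm i (k + 1) (by omega) hk, mul_assoc]
    · obtain rfl : i = k := by omega
      obtain ⟨i, rfl⟩ : ∃ j, i = j + 1 := ⟨i - 1, by omega⟩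
      have hb := h.braid (i + 1) (by omega) (by omega)
      rw [CC, CC, ← mul_assoc, ← mul_assoc, T_CC_gt h (by omega) (by omega)]
      simp only [mul_assoc] at hb ⊢
      rw [hb]

lemma CC_split (h : Rels n r q Q T) {k : ℕ} (hk : k + 1 < n) :
    ∃ D, CC T (k + 1) = T 1 * D ∧ T 0 * D = D * T 0 := by
  induction k with
  | zero => exact ⟨1, by simp [CC], by simp⟩
  | succ k ih =>
    obtain ⟨D, h1, h2⟩ := ih (by omega)
    refine ⟨D * T (k + 2), by rw [CC, h1, mul_assoc], ?_⟩
    rw [← mul_assoc, h2, mul_assoc, h.comm 0 (k + 2) (by omega) hk, mul_assoc]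

/-- As in `BB_split`; moving `V` past `c_n` moreover shifts its indices down by one. -/
lemma BB_split' (h : Rels (n + 1) r q Q T) {k : ℕ} (hk : k < n) :
    ∃ V, BB q T (k + 1) = V * inv q (T 1) ∧ T 0 * V = V * T 0 ∧ V * CC T n = CC T n * BB q T k := by
  induction k with
  | zero => exact ⟨1, by simp [BB], by simp, by simp [BB]⟩
  | succ k ih =>
    obtain ⟨V, h1, h2, h3⟩ := ih (by omega)
    refine ⟨inv q (T (k + 2)) * V, by rw [BB, h1, mul_assoc], ?_, ?_⟩
    · rw [← mul_assoc, ← inv_comm (h.comm 0 (k + 2) (by omega) (by omega)).symm, mul_assoc, h2,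
        mul_assoc]
    · have := T_CC h (k := n) (i := k + 1) (by omega) (by omega) (by omega)
      rw [mul_assoc, h3, BB, ← mul_assoc, ← mul_assoc]
      congr 1
      simp only [inv, smul_mul_assoc, mul_smul_comm, sub_mul, mul_sub, this, one_mul, mul_one]

/-- The commutator formula, transported to the spanning elements of the bigger algebra. -/
lemma U_BB (hq : q ≠ 0) (h : Rels (n + 1) r q Q T) {k : ℕ} (hk : k < n) (j : ℕ) :
    T 0 * (BB q T (k + 1) * (pp Q (T 0) j * CC T n)) =
      BB q T (k + 1) * (pp Q (T 0) j * (CC T n * T 0)) +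
      (1 - q⁻¹) • (T 0 * (CC T n * (BB q T k * pp Q (T 0) j)) -
        T 0 * (pp Q (T 0) j * (CC T n * BB q T k))) := by
  obtain ⟨V, h1, h2, h3⟩ := BB_split' h hk
  obtain ⟨n, rfl⟩ : ∃ m, n = m + 1 := ⟨n - 1, by omega⟩
  obtain ⟨D, d1, d2⟩ := CC_split h (k := n) (by omega)
  have key := congrArg (fun w => V * w * D)
    (pp_key hq Q (h.quad 1 le_rfl (by omega)) (h.braid01 (by omega)) j)
  have hp : pp Q (T 0) j * D = D * pp Q (T 0) j := pp_comm Q d2 j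
  have hv : pp Q (T 0) j * V = V * pp Q (T 0) j := pp_comm Q h2 j
  have e1 : CC T (n + 1) * (BB q T k * pp Q (T 0) j) = V * (T 1 * (pp Q (T 0) j * D)) := by
    rw [← mul_assoc, ← h3, d1, hp]; simp only [mul_assoc]
  have e2 : pp Q (T 0) j * (CC T (n + 1) * BB q T k) = V * (pp Q (T 0) j * (T 1 * D)) := by
    rw [← h3, d1, ← mul_assoc, hv]; simp only [mul_assoc]
  have e3 : ∀ w, T 0 * (V * w) = V * (T 0 * w) := fun w => by rw [← mul_assoc, h2, mul_assoc]
  rw [e1, e2, h1, d1]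
  simp only [mul_assoc, mul_sub, sub_mul, mul_smul_comm, smul_mul_assoc, e3, d2] at key ⊢
  rw [← d2] at key ⊢
  rw [← key]
  abel

end General2

/-! ### Evaluation of formal combinations -/

section Sigma

open Finsupp

variable {R S : Type} [Ring R] [Algebra F R] [Ring S] [Algebra F S] {n r : ℕ} {q : F} {Q : ℕ → F}
  {T : ℕ → R} {TS : ℕ → S} {ι : R →ₐ[F] S}

/-- The evaluation `∑ p_j c_n ι(m_j)` in `S` of a coefficient vector `m`. -/
noncomputable def eS (n : ℕ) (Q : ℕ → F) (TS : ℕ → S) (ι : R →ₐ[F] S) : NN R r →ₗ[F] S :=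
  eN Q (TS 0) (LinearMap.mulLeft F (CC TS n) ∘ₗ ι.toLinearMap)

/-- The evaluation in `S` of a formal combination of elements `b_k p_j c_n h`; degrees `k > n` are ignored. -/
noncomputable def sig (n : ℕ) (q : F) (Q : ℕ → F) (TS : ℕ → S) (ι : R →ₐ[F] S) :
    (ℕ →₀ NN R r) →ₗ[F] S :=
  Finsupp.lsum F fun k => if n < k then 0 else LinearMap.mulLeft F (BB q TS k) ∘ₗ eS n Q TS ι

lemma sig_big {k : ℕ} (h : n < k) (m : NN R r) : sig n q Q TS ι (single k m) = 0 := by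
  simp [sig, h]

lemma sig_single {k : ℕ} (h : k ≤ n) (m : NN R r) :
    sig n q Q TS ι (single k m) = BB q TS k * eS n Q TS ι m := by
  simp [sig, show ¬ n < k by omega]

lemma eS_apply (m : NN R r) :
    eS n Q TS ι m = ∑ j : Fin (r + 1), pp Q (TS 0) j * (CC TS n * ι (m j)) := by
  simp [eS, eN_apply]

lemma eS_smul {a : R} {b : S} (h0 : TS 0 * b = b * TS 0) (hb : b * CC TS n = CC TS n * ι a)
    (m : NN R r) : eS n Q TS ι (a • m) = b * eS n Q TS ι m := by
  simp only [eS_apply, Finset.mul_sum, Pi.smul_apply, smul_eq_mul, map_mul]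
  refine Finset.sum_congr rfl fun j _ => ?_
  rw [← mul_assoc (CC TS n), ← hb, ← mul_assoc b, ← pp_comm Q h0]
  simp only [mul_assoc]

variable (hq : q ≠ 0) (hS : Rels (n + 1) (r + 1) q Q TS) (hι : ∀ i < n, ι (T i) = TS i)
include hq hS hι

lemma sig_opT (i : ℕ) (hi : i + 1 ≤ n) (v : ℕ →₀ NN R r) :
    sig n q Q TS ι (opT n q T (i + 1) v) = TS (i + 1) * sig n q Q TS ι v := by
  suffices h : sig n q Q TS ι ∘ₗ opT n q T (i + 1) =
      LinearMap.mulLeft F (TS (i + 1)) ∘ₗ sig n q Q TS ι from LinearMap.congr_fun h v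
  refine Finsupp.lhom_ext fun k m => ?_
  simp only [LinearMap.comp_apply, LinearMap.mulLeft_apply]
  rcases lt_or_ge n k with h | h
  · rw [opT_big h, map_smul, sig_big h, smul_zero, mul_zero]
  rw [sig_single h]
  rcases Nat.lt_or_ge (i + 1) k with h1 | h1
  · have := T_CC hS (k := n) (i := i + 1) (by omega) (by omega) (by omega)
    rw [opT_lt h h1, sig_single h, eS_smul (b := TS (i + 2)) (hS.comm 0 _ (by omega) (by omega))
      (by rw [this, hι _ (by omega)]), ← mul_assoc, ← mul_assoc,
      T_BB_lt hq hS (by omega) (by omega) h1]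
  rcases Nat.lt_or_ge k i with h2 | h2
  · have := T_CC hS (k := n) (i := i) (by omega) (by omega) (by omega)
    rw [opT_gt h h2, sig_single h, eS_smul (b := TS (i + 1)) (hS.comm 0 _ (by omega) (by omega))
      (by rw [this, hι _ (by omega)]), ← mul_assoc, ← mul_assoc,
      T_BB_gt hS (by omega) (by omega)]
  obtain rfl | rfl : k = i ∨ k = i + 1 := by omega
  · rw [opT_pred hi, map_add, map_smul, map_smul, sig_single h, sig_single hi, ← mul_assoc,
      T_BB_succ hq, add_mul, smul_mul_assoc, smul_mul_assoc]
  · rw [opT_self hi, sig_single (by omega), ← mul_assoc, T_BB_self hq hS (by omega)]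

omit hq hS in
lemma map_BB {k : ℕ} (hk : k < n) : ι (BB q T k) = BB q TS k := by
  induction k with
  | zero => simp [BB]
  | succ k ih =>
    rw [BB, BB, map_mul, ih (by omega), inv, inv, map_smul, map_sub, hι _ hk, map_smul, map_one]

omit hq hS in
lemma map_pp (hn : 0 < n) (j : ℕ) : ι (pp Q (T 0) j) = pp Q (TS 0) j := by
  induction j with
  | zero => simp [pp]
  | succ k ih =>
    rw [pp, pp, map_mul, ih, map_sub, hι _ hn, map_smul, map_one]

lemma sig_opU (v : ℕ →₀ NN R r) :
    sig n q Q TS ι (opU n q Q T v) = TS 0 * sig n q Q TS ι v := by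
  suffices h : sig n q Q TS ι ∘ₗ opU n q Q T =
      LinearMap.mulLeft F (TS 0) ∘ₗ sig n q Q TS ι from LinearMap.congr_fun h v
  refine Finsupp.lhom_ext fun k m => ?_
  simp only [LinearMap.comp_apply, LinearMap.mulLeft_apply]
  rcases lt_or_ge n k with h | h
  · rw [opU_big h, map_smul, sig_big h, smul_zero, mul_zero]
  have hx : ∀ m : NN R r, eS n Q TS ι (xN Q m) = TS 0 * eS n Q TS ι m :=
    fun m => eN_x Q _ (hS.cyc (by omega)) _ m
  rw [sig_single h]
  obtain _ | k := k
  · rw [opU_zero, sig_single h, hx]; simp [BB]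
  · rw [opU_succ h, map_add, map_smul, sig_single h, sig_single (by omega), hx, BB, one_mul,
      dN_apply, smul_sub, map_sub, ← iN_smul]
    have e1 : eS (r := r) n Q TS ι (iN (F := F) (BB q T k * eN Q (T 0) LinearMap.id m)) =
        ∑ j : Fin (r + 1), CC TS n * (BB q TS k * (pp Q (TS 0) j * ι (m j))) := by
      rw [eS, eN_iN]
      simp only [LinearMap.comp_apply, LinearMap.mulLeft_apply, AlgHom.toLinearMap_apply, map_mul,
        eN_apply, map_sum, map_BB hι (show k < n by omega), map_pp hι (show 0 < n by omega),
        LinearMap.id_apply, Finset.mul_sum]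
    rw [e1]
    simp only [eS_apply, Finset.mul_sum, Pi.smul_apply, smul_eq_mul, map_mul, hι 0 (by omega),
      map_BB hι (show k < n by omega), ← Finset.sum_sub_distrib, Finset.smul_sum,
      ← Finset.sum_add_distrib]
    refine Finset.sum_congr rfl fun j _ => ?_
    have := congrArg (· * ι (m j)) (U_BB hq hS (k := k) (by omega) j)
    simp only [mul_assoc, add_mul, sub_mul, smul_mul_assoc, BB] at this
    simp only [BB, mul_assoc, this, mul_sub]

/-- Evaluation intertwines the operators `op` with left multiplication by the generators. -/
lemma sig_op (i : ℕ) (hi : i < n + 1) (v : ℕ →₀ NN R r) :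
    sig n q Q TS ι (op n q Q T i v) = TS i * sig n q Q TS ι v := by
  obtain _ | i := i
  · exact sig_opU hq hS hι v
  · exact sig_opT hq hS hι i (by omega) v

omit hι in
lemma sig_one : sig n q Q TS ι (single n (iN (F := F) 1 : NN R r)) = 1 := by
  rw [sig_single le_rfl, eS, eN_iN]
  simpa using BB_CC hq hS (k := n) (by omega)

end Sigma

/-! ### Stable subsets and the top coefficient -/

section Nondeg

open Finsupp

variable {R : Type} [Ring R] [Algebra F R] {n r : ℕ} {q : F} {Q : ℕ → F} {T : ℕ → R}

lemma opT_apply_succ {k : ℕ} (hk : k + 1 ≤ n) (v : ℕ →₀ NN R r) :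
    opT n q T (k + 1) v (k + 1) = q • v k := by
  suffices h : Finsupp.lapply (k + 1) ∘ₗ opT n q T (k + 1) =
      q • (Finsupp.lapply k : (ℕ →₀ NN R r) →ₗ[F] NN R r) from LinearMap.congr_fun h v
  refine Finsupp.lhom_ext fun l m => ?_
  simp only [LinearMap.comp_apply, LinearMap.smul_apply, lapply_apply]
  rcases lt_or_ge n l with h | h
  · rw [opT_big h]; simp [show l ≠ k + 1 by omega, show l ≠ k by omega]
  rcases Nat.lt_or_ge (k + 1) l with h1 | h1
  · rw [opT_lt h h1]; simp [show l ≠ k + 1 by omega, show l ≠ k by omega]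
  rcases Nat.lt_or_ge l k with h2 | h2
  · rw [opT_gt h h2]; simp [show l ≠ k + 1 by omega, show l ≠ k by omega]
  obtain rfl | rfl : l = k ∨ l = k + 1 := by omega
  · rw [opT_pred hk]; simp
  · rw [opT_self hk]; simp

lemma opT_apply_pred {k : ℕ} (hk : k + 1 ≤ n) (v : ℕ →₀ NN R r) :
    opT n q T (k + 1) v k = v (k + 1) + (q - 1) • v k := by
  suffices h : Finsupp.lapply k ∘ₗ opT n q T (k + 1) =
      Finsupp.lapply (k + 1) + (q - 1) • (Finsupp.lapply k : (ℕ →₀ NN R r) →ₗ[F] NN R r) from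
    LinearMap.congr_fun h v
  refine Finsupp.lhom_ext fun l m => ?_
  simp only [LinearMap.comp_apply, LinearMap.add_apply, LinearMap.smul_apply, lapply_apply]
  rcases lt_or_ge n l with h | h
  · rw [opT_big h]; simp [show l ≠ k + 1 by omega, show l ≠ k by omega]
  rcases Nat.lt_or_ge (k + 1) l with h1 | h1
  · rw [opT_lt h h1]; simp [show l ≠ k + 1 by omega, show l ≠ k by omega]
  rcases Nat.lt_or_ge l k with h2 | h2
  · rw [opT_gt h h2]; simp [show l ≠ k + 1 by omega, show l ≠ k by omega]
  obtain rfl | rfl : l = k ∨ l = k + 1 := by omega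
  · rw [opT_pred hk]; simp
  · rw [opT_self hk]; simp

lemma opT_apply_gt {i k : ℕ} (hik : i + 1 < k) (hk : k ≤ n) (v : ℕ →₀ NN R r) :
    opT n q T (i + 1) v k = T (i + 1) • v k := by
  suffices h : Finsupp.lapply k ∘ₗ opT n q T (i + 1) =
      lm (T (i + 1)) ∘ₗ (Finsupp.lapply k : (ℕ →₀ NN R r) →ₗ[F] NN R r) from
    LinearMap.congr_fun h v
  refine Finsupp.lhom_ext fun l m => ?_
  simp only [LinearMap.comp_apply, lapply_apply]
  rcases lt_or_ge n l with h | h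
  · rw [opT_big h]; simp [show l ≠ k by omega]
  rcases Nat.lt_or_ge (i + 1) l with h1 | h1
  · rw [opT_lt h h1]
    by_cases hl : l = k
    · subst hl; simp
    · simp [hl]
  rcases Nat.lt_or_ge l i with h2 | h2
  · rw [opT_gt h h2]; simp [show l ≠ k by omega]
  obtain rfl | rfl : l = i ∨ l = i + 1 := by omega
  · rw [opT_pred (by omega)]; simp [show l ≠ k by omega, show l + 1 ≠ k by omega]
  · rw [opT_self (by omega)]; simp [show i ≠ k by omega, show i + 1 ≠ k by omega]

lemma opU_apply_succ {k : ℕ} (hk : k + 1 ≤ n) (v : ℕ →₀ NN R r) :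
    opU n q Q T v (k + 1) = T 0 • v (k + 1) := by
  suffices h : Finsupp.lapply (k + 1) ∘ₗ opU n q Q T =
      lm (T 0) ∘ₗ (Finsupp.lapply (k + 1) : (ℕ →₀ NN R r) →ₗ[F] NN R r) from
    LinearMap.congr_fun h v
  refine Finsupp.lhom_ext fun l m => ?_
  simp only [LinearMap.comp_apply, lapply_apply]
  rcases lt_or_ge n l with h | h
  · rw [opU_big h]; simp [show l ≠ k + 1 by omega]
  obtain _ | l := l
  · rw [opU_zero]; simp
  · rw [opU_succ h]
    by_cases hl : l = k
    · subst hl; simp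
    · simp [hl]

lemma opU_apply_zero (v : ℕ →₀ NN R r) :
    opU n q Q T v 0 = xN Q (v 0) +
      (1 - q⁻¹) • ∑ k ∈ Finset.range n, xN Q (BB q T k • dN Q (T 0) (v (k + 1))) := by
  suffices h : Finsupp.lapply 0 ∘ₗ opU n q Q T = xN Q ∘ₗ Finsupp.lapply 0 +
      (1 - q⁻¹) • ∑ k ∈ Finset.range n, xN Q ∘ₗ lm (BB q T k) ∘ₗ dN Q (T 0) ∘ₗ
        (Finsupp.lapply (k + 1) : (ℕ →₀ NN R r) →ₗ[F] NN R r) by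
    simpa [LinearMap.sum_apply] using LinearMap.congr_fun h v
  refine Finsupp.lhom_ext fun l m => ?_
  simp only [LinearMap.comp_apply, LinearMap.add_apply, LinearMap.smul_apply, lapply_apply,
    LinearMap.sum_apply]
  rcases lt_or_ge n l with h | h
  · rw [opU_big h, Finset.sum_eq_zero]
    · simp [show l ≠ 0 by omega]
    · intro k hk
      rw [Finset.mem_range] at hk
      simp [show l ≠ k + 1 by omega]
  obtain _ | l := l
  · rw [opU_zero, Finset.sum_eq_zero]
    · simp
    · intro k hk
      simp
  · rw [opU_succ h, Finset.sum_eq_single_of_mem l (Finset.mem_range.2 h)]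
    · simp
    · intro k hk hkl
      simp [Ne.symm hkl]

/-- `T_{i+l}⁻¹ ⋯ T_{i+1}⁻¹`, a product of `l` inverses. -/
def WW (q : F) (T : ℕ → R) (i : ℕ) : ℕ → R
  | 0 => 1
  | l + 1 => inv q (T (i + l + 1)) * WW q T i l

lemma WW_zero (k : ℕ) : WW q T 0 k = BB q T k := by
  induction k with
  | zero => rfl
  | succ k ih => rw [WW, BB, ih, zero_add]

lemma WW_T (hq : q ≠ 0) (hT : Rels n (r + 1) q Q T) {i : ℕ} (hi : i + 1 < n) (l : ℕ) :
    WW q T i (l + 1) * T (i + 1) = WW q T (i + 1) l := by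
  induction l with
  | zero => simp [WW, inv_mul hq (hT.quad (i + 1) (by omega) hi)]
  | succ l ih => rw [WW, mul_assoc, ih, WW, show i + (l + 1) + 1 = i + 1 + l + 1 by omega]

variable (hq : q ≠ 0) (hT : Rels n (r + 1) q Q T) {K : Set (ℕ →₀ NN R r)}
  (hK : ∀ v ∈ K, ∀ i ≤ n, op n q Q T i v ∈ K)
include hq hK

/-- If the coefficients of index `j` vanish in degree `n` on a stable set `K`, they vanish in all
degrees `k ≤ n`, since `T_{k+1}` moves the degree `k` component to degree `k + 1`. -/
lemma down {j : Fin (r + 1)} (h : ∀ v ∈ K, v n j = 0) : ∀ v ∈ K, ∀ k ≤ n, v k j = 0 := by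
  suffices hs : ∀ d k, k + d = n → ∀ v ∈ K, v k j = 0 from
    fun v hv k hk => hs (n - k) k (by omega) v hv
  intro d
  induction d with
  | zero => rintro k rfl v hv; exact h v hv
  | succ d ih =>
    intro k hk v hv
    have h1 := ih (k + 1) (by omega) _ (hK v hv (k + 1) (by omega))
    rw [op, opT_apply_succ (by omega), Pi.smul_apply] at h1
    exact (smul_eq_zero_iff_right hq).1 h1

include hT

/-- If on a stable set `K` the coefficients of index `j` in degree `0` are the stated combination of
those in higher degrees, then they vanish in degree `n`: applying `T_{i+1}` turns such a relation
for degree `i` into one for degree `i + 1`, and in degree `n` the combination is empty. -/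
lemma chase {j : Fin (r + 1)} {e : F} (he : e = 0 ∨ e = 1 - q⁻¹)
    (h : ∀ v ∈ K, v 0 j = e • ∑ k ∈ Finset.range n, BB q T k * v (k + 1) j) :
    ∀ v ∈ K, v n j = 0 := by
  suffices hs : ∀ i ≤ n, ∀ v ∈ K,
      v i j = e • ∑ l ∈ Finset.range (n - i), WW q T i l * v (i + l + 1) j by
    intro v hv
    simpa using hs n le_rfl v hv
  intro i
  induction i with
  | zero =>
    intro _ v hv
    simp only [Nat.sub_zero, WW_zero, zero_add]
    exact h v hv
  | succ i ih =>
    intro hi v hv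
    have h0 := ih (by omega) v hv
    have h1 := ih (by omega) _ (hK v hv (i + 1) hi)
    rw [show n - i = (n - (i + 1)) + 1 by omega, Finset.sum_range_succ', op, opT_apply_pred hi,
      add_zero, opT_apply_succ hi] at h1
    have h2 : ∀ l ∈ Finset.range (n - (i + 1)), WW q T i (l + 1) *
        opT n q T (i + 1) v (i + (l + 1) + 1) j = WW q T (i + 1) l * v (i + 1 + l + 1) j := by
      intro l hl
      rw [Finset.mem_range] at hl
      rw [opT_apply_gt (by omega) (by omega), Pi.smul_apply, smul_eq_mul, ← mul_assoc,
        WW_T hq hT (by omega), show i + (l + 1) + 1 = i + 1 + l + 1 by omega]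
    rw [Finset.sum_congr rfl h2] at h1
    simp only [WW, one_mul, Pi.add_apply, Pi.smul_apply] at h1
    rcases he with rfl | rfl
    · simp only [zero_smul] at h0 h1 ⊢
      rw [h0] at h1
      simpa using h1
    · rw [eq_sub_of_add_eq h1, smul_add, smul_smul]
      have : (1 - q⁻¹) * q = q - 1 := by field_simp
      rw [this]
      abel

/-- A set stable under all generators, on which the last coordinate of the last component
vanishes, consists of elements without components in degrees `≤ n`. -/
lemma stable_zero (h0 : ∀ v ∈ K, v n (Fin.last r) = 0) : ∀ v ∈ K, ∀ k ≤ n, v k = 0 := by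
  -- descending induction on the index `j`, starting from `j = r`
  suffices hs : ∀ c ≤ r, ∀ v ∈ K, ∀ k ≤ n, ∀ j : Fin (r + 1), r ≤ j + c → v k j = 0 by
    intro v hv k hk
    ext j
    exact hs r le_rfl v hv k hk j (by omega)
  intro c
  induction c with
  | zero =>
    intro _ v hv k hk j hj
    obtain rfl : j = Fin.last r := Fin.ext (by simp; omega)
    exact down hq hK h0 v hv k hk
  | succ c ih =>
    intro hc v hv k hk j hj
    have ih := ih (by omega)
    rcases Nat.lt_or_ge (j + c : ℕ) r with hjc | hjc
    swap
    · exact ih v hv k hk j hjc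
    obtain ⟨j, rfl⟩ : ∃ i : Fin r, j = i.castSucc := ⟨⟨j, by omega⟩, rfl⟩
    simp only [Fin.val_castSucc] at hj hjc
    have hsucc : ∀ v ∈ K, ∀ k ≤ n, v k j.succ = 0 := fun v hv k hk =>
      ih v hv k hk j.succ (by simp; omega)
    refine down hq hK (chase hq hT hK (e := if (j : ℕ) = 0 then 0 else 1 - q⁻¹) ?_ ?_) v hv k hk
    · split_ifs <;> simp
    · intro v hv
      have h1 := hsucc _ (hK v hv 0 (by omega)) 0 (by omega)
      rw [op, opU_apply_zero] at h1
      simp only [Pi.add_apply, Pi.smul_apply, xN_succ, hsucc v hv 0 (by omega), smul_zero,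
        add_zero, Finset.sum_apply] at h1
      have h2 : ∀ k ∈ Finset.range n,
          BB q T k • dN Q (T 0) (v (k + 1)) j.castSucc +
            Q (j + 1) • BB q T k • dN Q (T 0) (v (k + 1)) j.succ =
          if (j : ℕ) = 0 then 0 else - (BB q T k * v (k + 1) j.castSucc) := by
        intro k hk
        rw [Finset.mem_range] at hk
        have a1 : dN Q (T 0) (v (k + 1)) j.succ = 0 := by
          rw [dN_apply, Pi.sub_apply, hsucc v hv _ (by omega)]
          simp [iN]
        have a2 : dN Q (T 0) (v (k + 1)) j.castSucc =
            if (j : ℕ) = 0 then 0 else - v (k + 1) j.castSucc := by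
          rw [dN_apply, Pi.sub_apply]
          split_ifs with hj0
          · have : j.castSucc = 0 := Fin.ext (by simpa using hj0)
            rw [this, eN_apply, Finset.sum_eq_single 0]
            · simp [iN, pp]
            · intro b _ hb
              have hb' : (b : ℕ) ≠ 0 := fun h => hb (Fin.ext h)
              rw [ih v hv (k + 1) (by omega) b (by omega)]; simp
            · simp
          · have : j.castSucc ≠ 0 := fun h => hj0 (by simpa using congrArg Fin.val h)
            simp [iN, this]
        rw [a1, a2]
        split_ifs <;> simp
      rw [Finset.sum_congr rfl h2] at h1
      split_ifs at h1 ⊢ with hj0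
      · simpa using h1
      · rw [Finset.sum_neg_distrib, smul_neg, add_neg_eq_zero] at h1
        exact h1

end Nondeg

/-! ### The induction step -/

/-- `A` is finite dimensional and has a linear form whose kernel contains no nonzero left ideal. -/
def Frob (F A : Type) [Field F] [Ring A] [Algebra F A] : Prop :=
  Module.Finite F A ∧ ∃ f : A →ₗ[F] F, ∀ v, (∀ s, f (s * v) = 0) → v = 0

section Step

open Finsupp

variable {R S : Type} [Ring R] [Algebra F R] [Ring S] [Algebra F S] {n r : ℕ} {q : F} {Q : ℕ → F}
  {T : ℕ → R} {TS : ℕ → S}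

/-- The Frobenius property passes from an algebra `R` generated by elements satisfying the relations
of `H_n` to an algebra `S` generated by elements satisfying those of `H_{n+1}`, provided that `S`
acts through the operators `op`. -/
lemma step (hq : q ≠ 0) (hT : Rels n (r + 1) q Q T) (hR : Algebra.adjoin F (Set.image T {i | i < n}) = ⊤)
    (hS : Rels (n + 1) (r + 1) q Q TS) (hS' : Algebra.adjoin F (Set.image TS {i | i < n + 1}) = ⊤)
    (ι : R →ₐ[F] S) (hι : ∀ i < n, ι (T i) = TS i)
    (ρ : S →ₐ[F] Module.End F (ℕ →₀ NN R r)) (hρ : ∀ i < n + 1, ρ (TS i) = op n q Q T i)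
    (hF : Frob F R) : Frob F S := by
  obtain ⟨hfin, f, hf⟩ := hF
  -- the vector representing `b_n c_n = 1`
  set v0 : ℕ →₀ NN R r := single n (iN (F := F) 1) with hv0
  let sg := sig (r := r) n q Q TS ι
  have hsig : ∀ s v, sg (ρ s v) = s * sg v := by
    intro s
    have hs : s ∈ Algebra.adjoin F (Set.image TS {i | i < n + 1}) := by rw [hS']; trivial
    induction hs using Algebra.adjoin_induction with
    | mem x hx =>
      obtain ⟨i, hi, rfl⟩ := hx
      intro v
      rw [hρ i hi]
      exact sig_op hq hS hι i hi v
    | algebraMap c =>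
      intro v
      rw [AlgHom.commutes, Module.algebraMap_end_apply, map_smul, Algebra.smul_def]
    | add x y _ _ hx hy => intro v; rw [map_add, LinearMap.add_apply, map_add, hx, hy, add_mul]
    | mul x y _ _ hx hy => intro v; rw [map_mul, Module.End.mul_apply, hx, hy, mul_assoc]
  have hsz : ∀ v : ℕ →₀ NN R r, (∀ k ≤ n, v k = 0) → sg v = 0 := by
    intro v hv
    rw [← Finsupp.sum_single v, Finsupp.sum, map_sum]
    refine Finset.sum_eq_zero fun k _ => ?_
    rcases lt_or_ge n k with h | h
    · exact sig_big h _
    · rw [hv k h, single_zero, map_zero]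
  have hone : sg v0 = 1 := sig_one hq hS
  have hinj : ∀ s, (∀ k ≤ n, ρ s v0 k = 0) → s = 0 := by
    intro s hs
    have := hsz _ hs
    rwa [hsig, hone, mul_one] at this
  -- the coefficient of `b_n p_r c_n`
  let θ : (ℕ →₀ NN R r) →ₗ[F] R := LinearMap.proj (Fin.last r) ∘ₗ Finsupp.lapply n
  have hθ : ∀ v, θ v = v n (Fin.last r) := fun v => rfl
  have hlin : ∀ h v, θ (ρ (ι h) v) = h * θ v := by
    intro h
    have hh : h ∈ Algebra.adjoin F (Set.image T {i | i < n}) := by rw [hR]; trivial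
    induction hh using Algebra.adjoin_induction with
    | mem x hx =>
      obtain ⟨i, hi, rfl⟩ := hx
      have hi : i < n := hi
      intro v
      rw [hι i hi, hρ i (by omega), hθ, hθ]
      obtain _ | i := i
      · obtain ⟨n, rfl⟩ : ∃ m, n = m + 1 := ⟨n - 1, by omega⟩
        rw [op, opU_apply_succ le_rfl]; rfl
      · rw [op, opT_apply_gt hi le_rfl]; rfl
    | algebraMap c =>
      intro v
      rw [AlgHom.commutes, AlgHom.commutes, Module.algebraMap_end_apply, map_smul, Algebra.smul_def]
    | add x y _ _ hx hy =>
      intro v; rw [map_add, map_add, LinearMap.add_apply, map_add, hx, hy, add_mul]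
    | mul x y _ _ hx hy =>
      intro v; rw [map_mul, map_mul, Module.End.mul_apply, hx, hy, mul_assoc]
  let π : S →ₗ[F] (ℕ →₀ NN R r) := LinearMap.applyₗ v0 ∘ₗ ρ.toLinearMap
  have hπ : ∀ s, π s = ρ s v0 := fun s => rfl
  refine ⟨?_, f ∘ₗ θ ∘ₗ π, ?_⟩
  · let p : S →ₗ[F] (Fin (n + 1) → NN R r) :=
      LinearMap.pi fun k => Finsupp.lapply (k : ℕ) ∘ₗ π
    refine Module.Finite.of_injective p ?_
    rw [injective_iff_map_eq_zero]
    intro s hs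
    refine hinj s fun k hk => ?_
    exact congrFun hs ⟨k, by omega⟩
  · intro v hv
    refine hinj v ?_
    refine stable_zero hq hT (K := {w | ∀ s, θ (ρ s w) = 0}) ?_ ?_ _ ?_
    · intro w hw i hi s
      rw [← hρ i (by omega), ← Module.End.mul_apply, ← map_mul]
      exact hw _
    · intro w hw
      have := hw 1
      rwa [map_one] at this
    · intro s
      -- by left `R`-linearity of `θ` the form on `R` is tested against all of `R`
      refine hf _ fun h => ?_
      have := hv (ι h * s)
      rwa [LinearMap.comp_apply, LinearMap.comp_apply, hπ, mul_assoc, map_mul ρ, Module.End.mul_apply,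
        hlin, map_mul ρ, Module.End.mul_apply] at this

end Step

/-! ### The Ariki–Koike algebra -/

section Concrete

variable (F) (n r : ℕ) (q : F) (Q : ℕ → F)

/-- The Ariki–Koike algebra with parameters given by the first `r` terms of a sequence. -/
abbrev HH : Type := ArikiKoike F n r q (fun j => Q j)

/-- The generators `T_i` of the Ariki–Koike algebra, extended by `0` for `i ≥ n`. -/
noncomputable def gen (i : ℕ) : HH F n r q Q :=
  if h : i < n then RingQuot.mkAlgHom F _ (FreeAlgebra.ι F (⟨i, h⟩ : Fin n)) else 0

variable {F n r q Q}

lemma prod_eq_pp {A : Type} [Ring A] [Algebra F A] (u : A) (r : ℕ) :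
    ((List.finRange r).map (fun j : Fin r => u - algebraMap F A (Q j))).prod = pp Q u r := by
  induction r with
  | zero => simp [pp]
  | succ r ih =>
    rw [List.finRange_succ_last, List.map_append, List.prod_append, List.map_map]
    simp only [Function.comp_def, Fin.val_castSucc, ih]
    simp only [List.map_cons, List.map_nil, List.prod_singleton, Fin.val_last, pp,
      Algebra.algebraMap_eq_smul_one]
    refine pp_comm Q ?_ r
    simp [mul_sub, sub_mul]

lemma quad_iff {A : Type} [Ring A] [Algebra F A] (t : A) :
    (t + 1) * (t - algebraMap F A q) = 0 ↔ t * t = (q - 1) • t + q • 1 := by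
  have : (t + 1) * (t - algebraMap F A q) = t * t - ((q - 1) • t + q • 1) := by
    rw [Algebra.algebraMap_eq_smul_one, add_mul, mul_sub, mul_smul_comm, mul_one, one_mul]
    module
  rw [this, sub_eq_zero]

lemma gen_rels : Rels n r q Q (gen F n r q Q) where
  quad i h1 h2 := by
    rw [← quad_iff]
    have := RingQuot.mkAlgHom_rel F (AKRel.quadratic (F := F) (r := r) (q := q)
      (Q := fun j => Q j) i h1 h2)
    simpa [gen, h2] using this
  braid i h1 h2 := by
    have := RingQuot.mkAlgHom_rel F (AKRel.braid (F := F) (r := r) (q := q)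
      (Q := fun j => Q j) i h1 h2)
    simpa [gen, h2, show i < n by omega] using this
  comm i j h1 h2 := by
    have := RingQuot.mkAlgHom_rel F (AKRel.comm (F := F) (r := r) (q := q)
      (Q := fun j => Q j) i j h1 h2)
    simpa [gen, h2, show i < n by omega] using this
  braid01 h := by
    have := RingQuot.mkAlgHom_rel F (AKRel.braid01 (F := F) (r := r) (q := q)
      (Q := fun j => Q j) h)
    simpa [gen, h, show 0 < n by omega] using this
  cyc h := by
    have := RingQuot.mkAlgHom_rel F (AKRel.cyclotomic (F := F) (r := r) (q := q)
      (Q := fun j => Q j) h)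
    rw [map_list_prod, List.map_map, map_zero] at this
    rw [← prod_eq_pp]
    simpa [gen, h, Function.comp_def] using this

/-- The universal property of the Ariki–Koike algebra. -/
lemma exists_lift {A : Type} [Ring A] [Algebra F A] {T : ℕ → A} (hT : Rels n r q Q T) :
    ∃ φ : HH F n r q Q →ₐ[F] A, ∀ i < n, φ (gen F n r q Q i) = T i := by
  refine ⟨RingQuot.liftAlgHom F ⟨FreeAlgebra.lift F fun i : Fin n => T i, ?_⟩, ?_⟩
  · intro x y hxy
    cases hxy with
    | cyclotomic h =>
      rw [map_list_prod, List.map_map, map_zero, ← hT.cyc h, ← prod_eq_pp]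
      simp [Function.comp_def]
    | braid01 h => simpa using hT.braid01 h
    | quadratic i h1 h2 => simpa using (quad_iff (T i)).2 (hT.quad i h1 h2)
    | braid i h1 h2 => simpa using hT.braid i h1 h2
    | comm i j h1 h2 => simpa using hT.comm i j h1 h2
  · intro i hi
    simp [gen, hi]

lemma exists_op {R : Type} [Ring R] [Algebra F R] {T : ℕ → R} (hq : q ≠ 0)
    (hT : Rels n (r + 1) q Q T) :
    ∃ ρ : HH F (n + 1) (r + 1) q Q →ₐ[F] Module.End F (ℕ →₀ NN R r),
      ∀ i < n + 1, ρ (gen F (n + 1) (r + 1) q Q i) = op n q Q T i :=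
  exists_lift (op_rels hq hT)

lemma adjoin_gen : Algebra.adjoin F (Set.image (gen F n r q Q) {i | i < n}) = ⊤ := by
  have h1 : Set.image (gen F n r q Q) {i | i < n} =
      Set.image (RingQuot.mkAlgHom F (AKRel F n r q (fun j => Q j)))
        (Set.range (FreeAlgebra.ι F)) := by
    ext x
    constructor
    · rintro ⟨i, hi, rfl⟩
      have hi : i < n := hi
      exact ⟨_, ⟨⟨i, hi⟩, rfl⟩, by simp [gen, hi]⟩
    · rintro ⟨_, ⟨i, rfl⟩, rfl⟩
      exact ⟨i, i.2, by simp [gen]⟩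
  rw [h1, ← AlgHom.map_adjoin, FreeAlgebra.adjoin_range_ι, Algebra.map_top, AlgHom.range_eq_top]
  exact RingQuot.mkAlgHom_surjective F _

/-- With at least one parameter, the Ariki–Koike algebra is a Frobenius algebra. -/
lemma frob_HH (hq : q ≠ 0) : Frob F (HH F n (r + 1) q Q) := by
  induction n with
  | zero =>
    have hsurj : ∀ x : HH F 0 (r + 1) q Q, ∃ c : F, algebraMap F _ c = x := by
      intro x
      have hx : x ∈ Algebra.adjoin F (Set.image (gen F 0 (r + 1) q Q) {i | i < 0}) := by
        rw [adjoin_gen]; trivial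
      simpa [Algebra.mem_bot] using hx
    obtain ⟨φ, -⟩ := exists_lift (F := F) (n := 0) (r := r + 1) (q := q) (Q := Q) (A := F)
      (T := fun _ => 0)
      ⟨fun i _ h => by omega, fun i _ h => by omega, fun i j _ h => by omega,
        fun h => by omega, fun h => by omega⟩
    refine ⟨Module.Finite.of_surjective (Algebra.linearMap F _) hsurj, φ.toLinearMap, ?_⟩
    intro v hv
    obtain ⟨c, rfl⟩ := hsurj v
    have := hv 1
    rw [one_mul, AlgHom.toLinearMap_apply, AlgHom.commutes] at this
    have hc : c = 0 := this
    rw [hc, map_zero]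
  | succ n ih =>
    obtain ⟨ι, hι⟩ := exists_lift (F := F) (gen_rels (F := F) (n := n + 1) (r := r + 1) (q := q)
      (Q := Q)).mono
    obtain ⟨ρ, hρ⟩ := exists_op hq (gen_rels (F := F) (n := n) (r := r + 1) (q := q) (Q := Q))
    exact step hq gen_rels adjoin_gen gen_rels adjoin_gen ι hι ρ hρ ih

end Concrete

/-! ### Frobenius algebras are self-injective -/

section Injective

open MulOpposite

variable {A : Type} [Ring A] [Algebra F A]

lemma injective_of_frob (hA : Frob F A) : Module.Injective Aᵐᵒᵖ A := by
  obtain ⟨hfin, f, hf⟩ := hA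
  let B : A →ₗ[F] Module.Dual F A := (LinearMap.mul F A).compr₂ f
  have hB : ∀ s v, B s v = f (s * v) := fun s v => rfl
  have hflip : Function.Injective B.flip := by
    rw [injective_iff_map_eq_zero]
    intro v hv
    exact hf v fun s => LinearMap.congr_fun hv s
  have hd : Module.finrank F A = Module.finrank F (Module.Dual F A) :=
    Subspace.dual_finrank_eq.symm
  have hflip' : Function.Surjective B.flip :=
    (LinearMap.injective_iff_surjective_of_finrank_eq_finrank hd).1 hflip
  have hinj : ∀ s, (∀ v, f (s * v) = 0) → s = 0 := by
    intro s hs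
    rw [← Module.forall_dual_apply_eq_zero_iff F]
    intro g
    obtain ⟨v, rfl⟩ := hflip' g
    exact hs v
  have hsurj : Function.Surjective B := by
    refine (LinearMap.injective_iff_surjective_of_finrank_eq_finrank hd).1 ?_
    rw [injective_iff_map_eq_zero]
    intro s hs
    exact hinj s fun v => LinearMap.congr_fun hs v
  refine Module.Baer.injective fun I g => ?_
  -- the functional `f ∘ g` on the right ideal `I`, to be extended to all of `A`
  let φ : I.restrictScalars F →ₗ[F] F :=
    { toFun x := f (g ⟨x, x.2⟩)
      map_add' x y := by rw [← map_add, ← map_add]; rfl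
      map_smul' c x := by
        have h1 : (⟨(c • x : I.restrictScalars F), (c • x).2⟩ : I) =
            MulOpposite.op (algebraMap F A c) • (⟨x, x.2⟩ : I) := by
          ext
          simp [Algebra.smul_def]
        rw [h1, map_smul, op_smul_eq_mul, ← Algebra.commutes, ← Algebra.smul_def, map_smul]
        rfl }
  obtain ⟨ψ, hψ⟩ := LinearMap.exists_extend φ
  obtain ⟨s, hs⟩ := hsurj (ψ ∘ₗ (opLinearEquiv F).toLinearMap)
  have hs' : ∀ a, f (s * a) = ψ (MulOpposite.op a) := fun a => LinearMap.congr_fun hs a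
  have hx : ∀ x (hx : x ∈ I), f (g ⟨x, hx⟩) = f (s * unop x) := by
    intro x hx
    rw [hs', op_unop]
    exact (LinearMap.congr_fun hψ (⟨x, hx⟩ : I.restrictScalars F)).symm
  refine ⟨LinearMap.toSpanSingleton Aᵐᵒᵖ A s, fun x hxI => ?_⟩
  rw [LinearMap.toSpanSingleton_apply, ← sub_eq_zero]
  refine hinj _ fun a => ?_
  have h1 := hx (MulOpposite.op a • x) (I.smul_mem _ hxI)
  have h2 : (⟨MulOpposite.op a • x, I.smul_mem _ hxI⟩ : I) = MulOpposite.op a • ⟨x, hxI⟩ := rfl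
  rw [h2, map_smul, op_smul_eq_mul] at h1
  rw [sub_mul, map_sub, h1, sub_eq_zero, smul_eq_mul, unop_mul, unop_op, ← mul_assoc]
  rfl

end Injective
end AK

/-- The Ariki-Koike algebra `H_{n,r}(q, Q₁, ..., Q_r)` is
self-injective: it is injective as a right module over itself. -/
theorem arikiKoike_selfInjective
    (F : Type) [Field F] [IsAlgClosed F] (n r : ℕ) (hn : 1 ≤ n)
    (q : F) (hq : q ≠ 0) (Q : Fin r → F) :
    Module.Injective (ArikiKoike F n r q Q)ᵐᵒᵖ (ArikiKoike F n r q Q) := by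
  obtain _ | r := r
  · have h := RingQuot.mkAlgHom_rel F (AKRel.cyclotomic (F := F) (q := q) (Q := Q) hn)
    have h1 : (1 : ArikiKoike F n 0 q Q) = 0 := by simpa using h
    have : Subsingleton (ArikiKoike F n 0 q Q) := subsingleton_of_zero_eq_one h1.symm
    exact ⟨fun X Y _ _ _ _ f _ g => ⟨0, fun x => Subsingleton.elim _ _⟩⟩
  · have hQ : Q = fun j : Fin (r + 1) => (fun i : ℕ => if h : i < r + 1 then Q ⟨i, h⟩ else 0) j := by
      ext j; simp only [j.2, dite_true]
    rw [hQ]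
    exact AK.injective_of_frob (AK.frob_HH (F := F) (n := n) (r := r)
      (Q := fun i : ℕ => if h : i < r + 1 then Q ⟨i, h⟩ else 0) hq)
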